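/- arXiv:1011.5833 — 2 statements merged into one kernel-verified Lean document; each statement's English description precedes it below -/
import Mathlib

section
/- Let d ≥ 2 and n = d + 2, let y and y₁ be two linearly independent solutions of the Schrödinger equation with parameters (α, λ), and let f = y/y₁. For every j ∈ {0,…,n−1}: f has asymptotic value 0 in the Stokes sector S_j (i.e., f(r·e^{iθ}) → 0 as r → +∞ for every θ with |θ − 2πj/n| < π/n) if and only if y is subdominant in S_j. -/
open Complex Filter Topology

/-- The polynomial potential `P_α(z) = z^d + α_{d-1} z^{d-1} + ⋯ + α₁ z`. -/
noncomputable def Pol (d : ℕ) (α : Fin (d - 1) → ℂ) (z : ℂ) : ℂ :=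
  z ^ d + ∑ i : Fin (d - 1), α i * z ^ ((i : ℕ) + 1)

/-- `y` is an (entire) solution of the Schrödinger equation `y'' = (P_α - λ) y`. -/
def IsSol (d : ℕ) (α : Fin (d - 1) → ℂ) (lam : ℂ) (y : ℂ → ℂ) : Prop :=
  Differentiable ℂ y ∧ ∀ z : ℂ, deriv (deriv y) z = (Pol d α z - lam) * y z

/-- `θ` is a ray direction of the Stokes sector `S_j`. -/
def DirIn (n j : ℕ) (θ : ℝ) : Prop :=
  |θ - 2 * Real.pi * j / n| < Real.pi / n

/-- `y` is subdominant in the Stokes sector `S_j`: it tends to `0` along every ray in `S_j`. -/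
def Subdominant (n j : ℕ) (y : ℂ → ℂ) : Prop :=
  ∀ θ : ℝ, DirIn n j θ →
    Tendsto (fun r : ℝ => y ((r : ℂ) * Complex.exp (θ * Complex.I))) atTop (𝓝 0)

/-- `u : ℝ → ℂ` solves `u'' = Q u` on the real line, with derivative `u'`. -/
structure RaySol (Q u u' : ℝ → ℂ) : Prop where
  deriv_fst : ∀ r, HasDerivAt u (u' r) r
  deriv_snd : ∀ r, HasDerivAt u' (Q r * u r) r

/-- The real quadratic quantity `Re (κ u' ū)`. -/
noncomputable def rayEnergy (κ : ℂ) (u u' : ℝ → ℂ) (r : ℝ) : ℝ :=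
  (κ * u' r * (starRingEnd ℂ) (u r)).re

/-- The rotation `κ` makes `Re (κ u' ū)` coercively increasing on `[R, ∞)`. -/
structure Coercive (Q : ℝ → ℂ) (κ : ℂ) (c R : ℝ) : Prop where
  pos : 0 < c
  norm_eq : ‖κ‖ = 1
  le_re : c ≤ κ.re
  le_re_mul : ∀ r, R ≤ r → c ≤ (κ * Q r).re

/-- `Re (κ u' ū)` stays nonpositive on `[R, ∞)`. -/
def Recessive (κ : ℂ) (R : ℝ) (u u' : ℝ → ℂ) : Prop :=
  ∀ r, R ≤ r → rayEnergy κ u u' r ≤ 0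

lemma not_bddAbove_of_le_deriv {h h' : ℝ → ℝ} {R δ B : ℝ} (hδ : 0 < δ)
    (hd : ∀ r, R ≤ r → HasDerivAt h (h' r) r) (hge : ∀ r, R ≤ r → δ ≤ h' r)
    (hB : ∀ r, R ≤ r → h r ≤ B) : False := by
  have key : ∀ r, R ≤ r → δ * (r - R) ≤ h r - h R := by
    intro r hr
    refine (convex_Ici R).mul_sub_le_image_sub_of_le_deriv
      (fun x hx => (hd x hx).continuousAt.continuousWithinAt)
      (fun x hx => ((hd x (interior_subset hx)).differentiableAt).differentiableWithinAt)
      (fun x hx => ?_) R (Set.self_mem_Ici) r hr hr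
    rw [(hd x (interior_subset hx)).deriv]
    exact hge x (interior_subset hx)
  have hBR := hB R le_rfl
  have hr : R ≤ R + (B - h R + 1) / δ := by
    have : 0 ≤ (B - h R + 1) / δ := div_nonneg (by linarith) hδ.le
    linarith
  have h1 := key _ hr
  have h2 := hB _ hr
  have h3 : δ * (R + (B - h R + 1) / δ - R) = B - h R + 1 := by
    field_simp
    ring
  linarith

lemma monotoneOn_Ici_of_hasDerivAt {h h' : ℝ → ℝ} {R : ℝ}
    (hd : ∀ r, R ≤ r → HasDerivAt h (h' r) r) (hge : ∀ r, R ≤ r → 0 ≤ h' r) :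
    MonotoneOn h (Set.Ici R) := by
  refine monotoneOn_of_deriv_nonneg (convex_Ici R)
    (fun x hx => (hd x hx).continuousAt.continuousWithinAt)
    (fun x hx => ((hd x (interior_subset hx)).differentiableAt).differentiableWithinAt)
    (fun x hx => ?_)
  rw [(hd x (interior_subset hx)).deriv]
  exact hge x (interior_subset hx)

lemma exists_tendsto_of_monotoneOn_Ici {h : ℝ → ℝ} {R B : ℝ} (hm : MonotoneOn h (Set.Ici R))
    (hB : ∀ r, R ≤ r → h r ≤ B) : ∃ L, Tendsto h atTop (𝓝 L) := by
  have hmono : Monotone fun r => h (max r R) := fun a b hab =>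
    hm (Set.mem_Ici.2 (le_max_right _ _)) (Set.mem_Ici.2 (le_max_right _ _))
      (max_le_max_right R hab)
  have hbdd : BddAbove (Set.range fun r => h (max r R)) :=
    ⟨B, by rintro _ ⟨r, rfl⟩; exact hB _ (le_max_right _ _)⟩
  refine ⟨_, (tendsto_atTop_ciSup hmono hbdd).congr' ?_⟩
  filter_upwards [eventually_ge_atTop R] with r hr
  rw [max_eq_left hr]

namespace RaySol

variable {Q u u' v v' : ℝ → ℂ} {κ : ℂ} {c R : ℝ}

lemma add_smul (hu : RaySol Q u u') (hv : RaySol Q v v') (a b : ℂ) :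
    RaySol Q (fun r => a * u r + b * v r) (fun r => a * u' r + b * v' r) where
  deriv_fst r := ((hu.deriv_fst r).const_mul a).add ((hv.deriv_fst r).const_mul b)
  deriv_snd r := by
    refine (((hu.deriv_snd r).const_mul a).add ((hv.deriv_snd r).const_mul b)).congr_deriv ?_
    ring

lemma hasDerivAt_energy (hu : RaySol Q u u') (κ : ℂ) (r : ℝ) :
    HasDerivAt (rayEnergy κ u u')
      ((κ * Q r).re * ‖u r‖ ^ 2 + κ.re * ‖u' r‖ ^ 2) r := by
  have h1 : HasDerivAt (fun r => (starRingEnd ℂ) (u r)) ((starRingEnd ℂ) (u' r)) r :=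
    (hu.deriv_fst r).star
  have h2 := (((hu.deriv_snd r).const_mul κ).mul h1)
  have h3 := Complex.reCLM.hasFDerivAt.comp_hasDerivAt r h2
  refine HasDerivAt.congr_deriv (f := rayEnergy κ u u') h3 ?_
  rw [Complex.reCLM_apply, Complex.add_re, mul_assoc κ (u' r), Complex.mul_conj, ← mul_assoc,
    mul_assoc (κ * Q r), Complex.mul_conj, Complex.re_mul_ofReal, Complex.re_mul_ofReal,
    Complex.normSq_eq_norm_sq, Complex.normSq_eq_norm_sq]

lemma le_energy_deriv (hQ : Coercive Q κ c R) {r : ℝ} (hr : R ≤ r) (u u' : ℝ → ℂ) :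
    c * (‖u r‖ ^ 2 + ‖u' r‖ ^ 2) ≤ (κ * Q r).re * ‖u r‖ ^ 2 + κ.re * ‖u' r‖ ^ 2 := by
  have h1 := mul_le_mul_of_nonneg_right (hQ.le_re_mul r hr) (sq_nonneg ‖u r‖)
  have h2 := mul_le_mul_of_nonneg_right hQ.le_re (sq_nonneg ‖u' r‖)
  linarith

lemma monotoneOn_energy (hu : RaySol Q u u') (hQ : Coercive Q κ c R) :
    MonotoneOn (rayEnergy κ u u') (Set.Ici R) :=
  monotoneOn_Ici_of_hasDerivAt (fun r _ => hu.hasDerivAt_energy κ r) fun r hr =>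
    le_trans (by have := hQ.pos; positivity) (le_energy_deriv hQ hr u u')

lemma hasDerivAt_norm_sq (hu : RaySol Q u u') (r : ℝ) :
    HasDerivAt (fun r => ‖u r‖ ^ 2) (2 * (u' r * (starRingEnd ℂ) (u r)).re) r := by
  have h1 : HasDerivAt (fun r => (starRingEnd ℂ) (u r)) ((starRingEnd ℂ) (u' r)) r :=
    (hu.deriv_fst r).star
  have h3 := Complex.reCLM.hasFDerivAt.comp_hasDerivAt r ((hu.deriv_fst r).mul h1)
  have e : (fun r => ‖u r‖ ^ 2) =
      (Complex.reCLM ∘ fun r => u r * (starRingEnd ℂ) (u r)) := by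
    funext x
    rw [Function.comp_apply, Complex.mul_conj, Complex.reCLM_apply, Complex.ofReal_re,
      Complex.normSq_eq_norm_sq]
  rw [e]
  refine h3.congr_deriv ?_
  simp only [Complex.reCLM_apply, Complex.add_re, Complex.mul_re, Complex.conj_re, Complex.conj_im]
  ring

lemma abs_re_mul_conj_le (a b : ℂ) :
    |2 * (a * (starRingEnd ℂ) b).re| ≤ ‖b‖ ^ 2 + ‖a‖ ^ 2 := by
  have h := Complex.abs_re_le_norm (a * (starRingEnd ℂ) b)
  rw [norm_mul, RCLike.norm_conj] at h
  rw [abs_mul, abs_two]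
  nlinarith [sq_nonneg (‖a‖ - ‖b‖)]

lemma tendsto_zero_of_recessive (hu : RaySol Q u u') (hQ : Coercive Q κ c R)
    (hr : Recessive κ R u u') : Tendsto u atTop (𝓝 0) := by
  have hc := hQ.pos
  obtain ⟨L, hL⟩ := exists_tendsto_of_monotoneOn_Ici (hu.monotoneOn_energy hQ) hr
  have hm : MonotoneOn (fun r => rayEnergy κ u u' r - c * ‖u r‖ ^ 2) (Set.Ici R) := by
    refine monotoneOn_Ici_of_hasDerivAt
      (fun r _ => (hu.hasDerivAt_energy κ r).sub ((hu.hasDerivAt_norm_sq r).const_mul c))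
      fun r hr' => ?_
    have h1 := le_energy_deriv hQ hr' u u'
    have h2 := (abs_le.1 (abs_re_mul_conj_le (u' r) (u r))).2
    have h3 := mul_le_mul_of_nonneg_left h2 hc.le
    linarith
  obtain ⟨M, hM⟩ := exists_tendsto_of_monotoneOn_Ici (B := 0) hm fun r hr' => by
    have := hr r hr'
    have : 0 ≤ c * ‖u r‖ ^ 2 := by positivity
    linarith
  have hF : Tendsto (fun r => c * ‖u r‖ ^ 2) atTop (𝓝 (L - M)) :=
    (hL.sub hM).congr fun r => by ring
  have hnn : 0 ≤ L - M := ge_of_tendsto' hF fun r => by positivity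
  have h0 : L - M = 0 := by
    by_contra hne
    have hp : 0 < L - M := lt_of_le_of_ne hnn (Ne.symm hne)
    obtain ⟨S, hS⟩ := eventually_atTop.1 (hF.eventually (lt_mem_nhds (half_lt_self hp)))
    refine not_bddAbove_of_le_deriv (R := max R S) (B := 0) (half_pos hp)
      (fun r _ => hu.hasDerivAt_energy κ r) (fun r hr' => ?_)
      fun r hr' => hr r ((le_max_left _ _).trans hr')
    have h1 := le_energy_deriv hQ ((le_max_left _ _).trans hr') u u'
    have h2 := hS r ((le_max_right _ _).trans hr')
    have h3 : 0 ≤ c * ‖u' r‖ ^ 2 := by positivity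
    linarith
  rw [h0] at hF
  have h1 : Tendsto (fun r => ‖u r‖ ^ 2) atTop (𝓝 0) := by
    have := hF.const_mul c⁻¹
    rw [mul_zero] at this
    refine this.congr fun r => ?_
    field_simp
  rw [tendsto_zero_iff_norm_tendsto_zero]
  have h2 := h1.sqrt
  rw [Real.sqrt_zero] at h2
  exact h2.congr fun r => Real.sqrt_sq (norm_nonneg _)

lemma energy_le (hκ : ‖κ‖ = 1) (u u' : ℝ → ℂ) (r : ℝ) :
    rayEnergy κ u u' r ≤ ‖u' r‖ * ‖u r‖ := by
  refine (Complex.re_le_norm _).trans ?_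
  rw [norm_mul, norm_mul, RCLike.norm_conj, hκ, one_mul]

lemma recessive_of_tendsto_zero (hu : RaySol Q u u') (hQ : Coercive Q κ c R)
    (h0 : Tendsto u atTop (𝓝 0)) : Recessive κ R u u' := by
  have hc := hQ.pos
  intro r₀ hr₀
  by_contra! hpos
  obtain ⟨S, hS⟩ := eventually_atTop.1
    ((tendsto_zero_iff_norm_tendsto_zero.1 h0).eventually (gt_mem_nhds one_pos))
  have hgpos : ∀ r, max r₀ S ≤ r → 0 < rayEnergy κ u u' r := fun r hr =>
    hpos.trans_le (hu.monotoneOn_energy hQ hr₀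
      (hr₀.trans ((le_max_left _ _).trans hr)) ((le_max_left _ _).trans hr))
  refine not_bddAbove_of_le_deriv (R := max r₀ S) (B := 0) hc
    (fun r hr => ((hu.hasDerivAt_energy κ r).inv (hgpos r hr).ne').neg) (fun r hr => ?_)
    fun r hr => ?_
  · have hg := hgpos r hr
    have h1 := le_energy_deriv hQ (hr₀.trans ((le_max_left _ _).trans hr)) u u'
    have h2 := energy_le hQ.norm_eq u u' r
    have h3 : ‖u r‖ ≤ 1 := (hS r ((le_max_right _ _).trans hr)).le
    have h4 : rayEnergy κ u u' r ≤ ‖u' r‖ :=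
      h2.trans (mul_le_of_le_one_right (norm_nonneg _) h3)
    have h5 : rayEnergy κ u u' r ^ 2 ≤ ‖u' r‖ ^ 2 := pow_le_pow_left₀ hg.le h4 2
    rw [neg_div, neg_neg, le_div_iff₀ (by positivity)]
    have h6 := mul_le_mul_of_nonneg_left h5 hc.le
    have h7 : 0 ≤ c * ‖u r‖ ^ 2 := by positivity
    linarith
  · have := inv_pos.2 (hgpos r hr)
    simpa using this.le

lemma not_recessive_of_wronskian_ne_zero (hu : RaySol Q u u') (hv : RaySol Q v v')
    (hQ : Coercive Q κ c R) {W : ℂ} (hW : W ≠ 0) (hw : ∀ r, u r * v' r - u' r * v r = W)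
    (hru : Recessive κ R u u') : ¬ Recessive κ R v v' := by
  intro hrv
  have hc := hQ.pos
  refine not_bddAbove_of_le_deriv (R := R) (B := 0) (mul_pos hc (norm_pos_iff.2 hW))
    (fun r _ => (hu.hasDerivAt_energy κ r).add (hv.hasDerivAt_energy κ r)) (fun r hr => ?_)
    fun r hr => add_nonpos (hru r hr) (hrv r hr)
  have h1 := le_energy_deriv hQ hr u u'
  have h2 := le_energy_deriv hQ hr v v'
  have h3 : ‖W‖ ≤ ‖u r‖ * ‖v' r‖ + ‖u' r‖ * ‖v r‖ := by
    rw [← hw r, ← norm_mul, ← norm_mul]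
    exact norm_sub_le _ _
  have h4 : ‖W‖ ≤ (‖u r‖ ^ 2 + ‖u' r‖ ^ 2) + (‖v r‖ ^ 2 + ‖v' r‖ ^ 2) := by
    nlinarith [sq_nonneg (‖u r‖ - ‖v' r‖), sq_nonneg (‖u' r‖ - ‖v r‖), sq_nonneg ‖u r‖,
      sq_nonneg ‖u' r‖, sq_nonneg ‖v r‖, sq_nonneg ‖v' r‖]
  have h5 := mul_le_mul_of_nonneg_left h4 hc.le
  linarith

lemma eventually_energy_pos (hu : RaySol Q u u') (hQ : Coercive Q κ c R)
    (hr : ¬ Recessive κ R u u') : ∀ᶠ r in atTop, 0 < rayEnergy κ u u' r := by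
  unfold Recessive at hr
  push Not at hr
  obtain ⟨r₀, hr₀, h⟩ := hr
  filter_upwards [eventually_ge_atTop r₀] with r hr
  exact h.trans_le (hu.monotoneOn_energy hQ hr₀ (hr₀.trans hr) hr)

lemma ne_zero_of_energy_pos {r : ℝ} (h : 0 < rayEnergy κ u u' r) : u r ≠ 0 := by
  intro h0
  simp [rayEnergy, h0] at h

lemma continuous_energy_add_smul (κ : ℂ) (u u' v v' : ℝ → ℂ) (r : ℝ) :
    Continuous fun p : ℂ × ℂ =>
      rayEnergy κ (fun r => p.1 * u r + p.2 * v r) (fun r => p.1 * u' r + p.2 * v' r) r := by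
  unfold rayEnergy
  fun_prop

/-- A recessive solution is negligible with respect to any independent solution. -/
lemma tendsto_div_of_recessive (hu : RaySol Q u u') (hv : RaySol Q v v')
    (hQ : Coercive Q κ c R) {W : ℂ} (hW : W ≠ 0) (hw : ∀ r, u r * v' r - u' r * v r = W)
    (hru : Recessive κ R u u') : Tendsto (fun r => u r / v r) atTop (𝓝 0) := by
  have key : ∀ T : ℝ, ∃ S, ∀ t ∈ Metric.closedBall (0 : ℂ) T, ∀ r, S ≤ r →
      0 < rayEnergy κ (fun r => t * u r + 1 * v r) (fun r => t * u' r + 1 * v' r) r := by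
    intro T
    refine (isCompact_closedBall (0 : ℂ) T).induction_on
      (p := fun s => ∃ S, ∀ t ∈ s, ∀ r, S ≤ r →
        0 < rayEnergy κ (fun r => t * u r + 1 * v r) (fun r => t * u' r + 1 * v' r) r)
      ⟨0, by simp⟩ (fun s t hst ⟨S, hS⟩ => ⟨S, fun x hx => hS x (hst hx)⟩) ?_ ?_
    · rintro s t ⟨S, hS⟩ ⟨S', hS'⟩
      refine ⟨max S S', ?_⟩
      rintro x (hx | hx) r hr
      · exact hS x hx r ((le_max_left _ _).trans hr)
      · exact hS' x hx r ((le_max_right _ _).trans hr)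
    · intro t _
      have hnr := not_recessive_of_wronskian_ne_zero hu (hu.add_smul hv t 1) hQ hW
        (fun r => by rw [← hw r]; ring) hru
      unfold Recessive at hnr
      push Not at hnr
      obtain ⟨r₀, hr₀, h⟩ := hnr
      have hcont : Continuous fun t : ℂ =>
          rayEnergy κ (fun r => t * u r + 1 * v r) (fun r => t * u' r + 1 * v' r) r₀ := by
        unfold rayEnergy
        fun_prop
      have hopen := isOpen_lt (continuous_const (y := (0 : ℝ))) hcont
      refine ⟨_, mem_nhdsWithin_of_mem_nhds (hopen.mem_nhds h), r₀, fun s hs r hr => ?_⟩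
      exact lt_of_lt_of_le (Set.mem_ofPred.1 hs)
        ((hu.add_smul hv s 1).monotoneOn_energy hQ hr₀ (hr₀.trans hr) hr)
  rw [Metric.tendsto_atTop]
  intro ε hε
  obtain ⟨S, hS⟩ := key ε⁻¹
  refine ⟨S, fun r hr => ?_⟩
  rw [dist_zero_right]
  by_contra! hle
  have hu0 : u r ≠ 0 := by
    intro h0
    rw [h0, zero_div, norm_zero] at hle
    linarith
  refine ne_zero_of_energy_pos (hS (-(v r / u r)) ?_ r hr) ?_
  · rw [mem_closedBall_zero_iff, norm_neg, ← inv_div, norm_inv]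
    exact inv_anti₀ hε hle
  · field_simp
    ring

/-- The solution space contains a nontrivial recessive solution. -/
lemma exists_recessive (hu : RaySol Q u u') (hv : RaySol Q v v') (hQ : Coercive Q κ c R) :
    ∃ p : ℂ × ℂ, p ≠ 0 ∧
      Recessive κ R (fun r => p.1 * u r + p.2 * v r) (fun r => p.1 * u' r + p.2 * v' r) := by
  let K : ℝ → Set (ℂ × ℂ) := fun s => Metric.sphere 0 1 ∩ {p | rayEnergy κ
    (fun r => p.1 * u r + p.2 * v r) (fun r => p.1 * u' r + p.2 * v' r) (max R s) ≤ 0}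
  have hclosed : ∀ s, IsClosed (K s) := fun s => Metric.isClosed_sphere.inter
    (isClosed_le (continuous_energy_add_smul κ u u' v v' _) continuous_const)
  have hanti : ∀ s t, s ≤ t → K t ⊆ K s := fun s t hst p hp => ⟨hp.1,
    ((hu.add_smul hv p.1 p.2).monotoneOn_energy hQ (Set.mem_Ici.2 (le_max_left _ _))
      (Set.mem_Ici.2 (le_max_left _ _))      (max_le_max_left R hst)).trans hp.2⟩
  have hne : ∀ s, (K s).Nonempty := by
    intro s
    obtain ⟨p, hp, hp0⟩ : ∃ p : ℂ × ℂ, p ≠ 0 ∧ p.1 * u (max R s) + p.2 * v (max R s) = 0 := by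
      by_cases h : u (max R s) = 0
      · exact ⟨(1, 0), by simp, by simp [h]⟩
      · refine ⟨(-v (max R s), u (max R s)), fun h' => h (congrArg Prod.snd h'), ?_⟩
        ring
    have hnp := norm_pos_iff.2 hp
    refine ⟨((‖p‖⁻¹ : ℝ) : ℂ) • p, ?_, ?_⟩
    · rw [mem_sphere_zero_iff_norm, norm_smul, Complex.norm_real, norm_inv, norm_norm]
      exact inv_mul_cancel₀ hnp.ne'
    · have : (((‖p‖⁻¹ : ℝ) : ℂ) * p.1) * u (max R s) + (((‖p‖⁻¹ : ℝ) : ℂ) * p.2) * v (max R s)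
          = 0 := by
        rw [mul_assoc, mul_assoc, ← mul_add, hp0, mul_zero]
      simp only [Set.mem_ofPred_eq, rayEnergy, Prod.smul_fst, Prod.smul_snd, smul_eq_mul]
      rw [this, map_zero, mul_zero, Complex.zero_re]
  obtain ⟨p, hp⟩ := IsCompact.nonempty_iInter_of_directed_nonempty_isCompact_isClosed K
    (fun s t => ⟨max s t, hanti _ _ (le_max_left _ _), hanti _ _ (le_max_right _ _)⟩) hne
    (fun s => (isCompact_sphere 0 1).of_isClosed_subset (hclosed s) Set.inter_subset_left)
    hclosed
  rw [Set.mem_iInter] at hp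
  refine ⟨p, ?_, fun r hr => ?_⟩
  · rintro rfl
    simpa using (hp 0).1
  · have := (hp r).2
    rwa [max_eq_right hr] at this

lemma eventually_ne_zero (hv : RaySol Q v v') (hQ : Coercive Q κ c R) {W : ℂ} (hW : W ≠ 0)
    (hw : ∀ r, u r * v' r - u' r * v r = W) : ∀ᶠ r in atTop, v r ≠ 0 := by
  by_cases hr : Recessive κ R v v'
  · have hlt : ∀ r, R ≤ r → v r ≠ 0 := by
      intro r hRr h0
      have hzero : ∀ s, r ≤ s → rayEnergy κ v v' s = 0 := fun s hs =>
        le_antisymm (hr s (hRr.trans hs)) (by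
          have := hv.monotoneOn_energy hQ hRr (hRr.trans hs) hs
          simpa [rayEnergy, h0] using this)
      have hev : rayEnergy κ v v' =ᶠ[𝓝 (r + 1)] fun _ => 0 := by
        filter_upwards [lt_mem_nhds (lt_add_one r)] with s hs using hzero s hs.le
      have hd := (hv.hasDerivAt_energy κ (r + 1)).unique
        ((hasDerivAt_const (r + 1) (0 : ℝ)).congr_of_eventuallyEq hev)
      have h1 := le_energy_deriv hQ (hRr.trans (lt_add_one r).le) v v'
      rw [hd] at h1
      have h2 : ‖v (r + 1)‖ ^ 2 + ‖v' (r + 1)‖ ^ 2 ≤ 0 := by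
        by_contra! h
        exact absurd h1 (not_le.2 (mul_pos hQ.pos h))
      have h3 : v (r + 1) = 0 := by
        rw [← norm_eq_zero]
        nlinarith [sq_nonneg ‖v (r + 1)‖, sq_nonneg ‖v' (r + 1)‖]
      have h4 : v' (r + 1) = 0 := by
        rw [← norm_eq_zero]
        nlinarith [sq_nonneg ‖v (r + 1)‖, sq_nonneg ‖v' (r + 1)‖]
      apply hW
      rw [← hw (r + 1), h3, h4]
      ring
    filter_upwards [eventually_ge_atTop R] with r h using hlt r h
  · filter_upwards [hv.eventually_energy_pos hQ hr] with r h using ne_zero_of_energy_pos h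

theorem tendsto_div_iff (hu : RaySol Q u u') (hv : RaySol Q v v') (hQ : Coercive Q κ c R)
    {W : ℂ} (hW : W ≠ 0) (hw : ∀ r, u r * v' r - u' r * v r = W) :
    Tendsto (fun r => u r / v r) atTop (𝓝 0) ↔ Tendsto u atTop (𝓝 0) := by
  refine ⟨fun h => ?_, fun h =>
    tendsto_div_of_recessive hu hv hQ hW hw (hu.recessive_of_tendsto_zero hQ h)⟩
  refine hu.tendsto_zero_of_recessive hQ ?_
  by_contra hnr
  obtain ⟨⟨a, b⟩, hp, hrec⟩ := exists_recessive hu hv hQ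
  have hu0 : ∀ᶠ r in atTop, u r ≠ 0 :=
    (hu.eventually_energy_pos hQ hnr).mono fun r h => ne_zero_of_energy_pos h
  have hv0 := hv.eventually_ne_zero hQ hW hw
  have hb : b ≠ 0 := by
    rintro rfl
    have ha : a ≠ 0 := by
      rintro rfl
      exact hp rfl
    refine hnr (hu.recessive_of_tendsto_zero hQ ?_)
    have := ((hu.add_smul hv a 0).tendsto_zero_of_recessive hQ hrec).const_mul a⁻¹
    rw [mul_zero] at this
    refine this.congr fun r => ?_
    field_simp
    ring
  have h1 : Tendsto (fun r => (a * u r + b * v r) / u r) atTop (𝓝 0) :=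
    tendsto_div_of_recessive (hu.add_smul hv a b) hu hQ (W := -(b * W))
      (neg_ne_zero.2 (mul_ne_zero hb hW)) (fun r => by rw [← hw r]; ring) hrec
  have h2 := h1.mul h
  have h3 := h.const_mul a
  have h4 := h2.sub h3
  simp only [mul_zero, sub_zero] at h4
  refine hb (tendsto_nhds_unique (h4.congr' ?_) tendsto_const_nhds).symm
  filter_upwards [hu0, hv0] with r hur hvr
  field_simp
  ring

end RaySol

lemma IsSol.raySol {d : ℕ} {α : Fin (d - 1) → ℂ} {lam : ℂ} {y : ℂ → ℂ}
    (hy : IsSol d α lam y) (e : ℂ) :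
    RaySol (fun r => e ^ 2 * (Pol d α (r * e) - lam)) (fun r => y (r * e))
      (fun r => e * deriv y (r * e)) := by
  have hlin : ∀ r : ℝ, HasDerivAt (fun r : ℝ => (r : ℂ) * e) e r := fun r => by
    simpa using (Complex.ofRealCLM.hasDerivAt (x := r)).mul_const e
  constructor
  · intro r
    exact (hy.1 (r * e)).hasDerivAt.scomp r (hlin r)
  · intro r
    have h := (hy.1.deriv (r * e)).hasDerivAt.scomp r (hlin r)
    refine (h.const_mul e).congr_deriv ?_
    rw [hy.2, smul_eq_mul]
    ring

lemma IsSol.wronskian_const {d : ℕ} {α : Fin (d - 1) → ℂ} {lam : ℂ} {y y₁ : ℂ → ℂ}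
    (hy : IsSol d α lam y) (hy₁ : IsSol d α lam y₁) (z w : ℂ) :
    y z * deriv y₁ z - deriv y z * y₁ z = y w * deriv y₁ w - deriv y w * y₁ w := by
  have hd : ∀ z, HasDerivAt (fun z => y z * deriv y₁ z - deriv y z * y₁ z) 0 z := by
    intro z
    refine (((hy.1 z).hasDerivAt.mul (hy₁.1.deriv z).hasDerivAt).sub
      ((hy.1.deriv z).hasDerivAt.mul (hy₁.1 z).hasDerivAt)).congr_deriv ?_
    rw [hy.2, hy₁.2]
    ring
  exact is_const_of_deriv_eq_zero (fun z => (hd z).differentiableAt) (fun z => (hd z).deriv) z w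

lemma wronskian_ne_zero {y y₁ : ℂ → ℂ} (hy : Differentiable ℂ y) (hy₁ : Differentiable ℂ y₁)
    (hind : LinearIndependent ℂ ![y, y₁]) : ∃ z, y z * deriv y₁ z - deriv y z * y₁ z ≠ 0 := by
  by_contra! hW
  rw [LinearIndependent.pair_iff] at hind
  obtain ⟨z₀, hz₀⟩ : ∃ z, y₁ z ≠ 0 := by
    by_contra! h
    exact one_ne_zero (hind 0 1 (by funext z; simp [h z])).2
  obtain ⟨ε, hε, hball⟩ := Metric.eventually_nhds_iff_ball.1
    (hy₁.continuous.continuousAt.eventually_ne hz₀)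
  have hquot : ∀ z ∈ Metric.ball z₀ ε, y z / y₁ z = y z₀ / y₁ z₀ := by
    intro z hz
    refine Metric.isOpen_ball.is_const_of_deriv_eq_zero
      (f := fun z => y z / y₁ z) (convex_ball z₀ ε).isPreconnected
      (fun x hx => ((hy x).div (hy₁ x) (hball x hx)).differentiableWithinAt) ?_ hz
      (Metric.mem_ball_self hε)
    intro x hx
    have := ((hy x).hasDerivAt.div (hy₁ x).hasDerivAt (hball x hx)).deriv
    have hW' : deriv y x * y₁ x - y x * deriv y₁ x = 0 := by linear_combination -hW x
    rw [hW', zero_div] at this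
    exact this
  have hall : y = fun z => y z₀ / y₁ z₀ * y₁ z := by
    have hA : AnalyticOnNhd ℂ y Set.univ := fun z _ => hy.analyticAt z
    have hB : AnalyticOnNhd ℂ (fun z => y z₀ / y₁ z₀ * y₁ z) Set.univ :=
      fun z _ => (hy₁.const_mul _).analyticAt z
    refine hA.eq_of_eventuallyEq hB (z₀ := z₀) ?_
    filter_upwards [Metric.ball_mem_nhds z₀ hε] with z hz
    rw [← hquot z hz, div_mul_cancel₀ _ (hball z hz)]
  refine one_ne_zero (hind 1 (-(y z₀ / y₁ z₀)) ?_).1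
  funext z
  have := congrFun hall z
  simp only [Pi.add_apply, Pi.smul_apply, smul_eq_mul, Pi.zero_apply]
  linear_combination this

lemma tendsto_pol_div_pow {d : ℕ} (hd : 2 ≤ d) (α : Fin (d - 1) → ℂ) (lam e : ℂ) :
    Tendsto (fun r : ℝ => (Pol d α (r * e) - lam) / (r : ℂ) ^ d) atTop (𝓝 (e ^ d)) := by
  have hpow : ∀ k, k < d → Tendsto (fun r : ℝ => (r : ℂ) ^ k / (r : ℂ) ^ d) atTop (𝓝 0) := by
    intro k hk
    have h := (Complex.continuous_ofReal.tendsto 0).comp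
      (tendsto_pow_div_pow_atTop_zero (𝕜 := ℝ) hk)
    simpa [Function.comp_def] using h
  have hsum : Tendsto (fun r : ℝ => ∑ i : Fin (d - 1),
      α i * e ^ ((i : ℕ) + 1) * ((r : ℂ) ^ ((i : ℕ) + 1) / (r : ℂ) ^ d)) atTop (𝓝 0) := by
    rw [show (0 : ℂ) = ∑ i : Fin (d - 1), α i * e ^ ((i : ℕ) + 1) * 0 by simp]
    exact tendsto_finsetSum _ fun i _ => (hpow _ (by have := i.2; omega)).const_mul _
  have h := (hsum.const_add (e ^ d)).sub ((hpow 0 (by omega)).const_mul lam)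
  simp only [mul_zero, add_zero, sub_zero] at h
  refine h.congr' ?_
  filter_upwards [eventually_gt_atTop 0] with r hr
  have hr' : (r : ℂ) ≠ 0 := Complex.ofReal_ne_zero.2 hr.ne'
  rw [Pol, sub_div, add_div, Finset.sum_div, mul_pow, mul_div_cancel_left₀ _ (pow_ne_zero d hr'),
    pow_zero, mul_one_div]
  congr 2
  refine Finset.sum_congr rfl fun i _ => ?_
  rw [mul_pow]
  ring

lemma exists_coercive {d : ℕ} (hd : 2 ≤ d) (α : Fin (d - 1) → ℂ) (lam : ℂ) {j : ℕ} {θ : ℝ}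
    (hθ : DirIn (d + 2) j θ) :
    ∃ κ c R, Coercive (fun r : ℝ => exp (θ * I) ^ 2 * (Pol d α (r * exp (θ * I)) - lam))
      κ c R := by
  have hnR : (0 : ℝ) < (d + 2 : ℕ) := by positivity
  obtain ⟨φ, hφ⟩ : ∃ φ : ℝ, φ = θ - 2 * Real.pi * j / (d + 2 : ℕ) := ⟨_, rfl⟩
  obtain ⟨ω, hω⟩ : ∃ ω : ℝ, ω = (d + 2 : ℕ) * φ / 2 := ⟨_, rfl⟩
  have hcos : 0 < Real.cos ω := by
    have h : |φ| < Real.pi / (d + 2 : ℕ) := by rw [hφ]; exact hθ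
    rw [abs_lt, ← neg_div, div_lt_iff₀ hnR, lt_div_iff₀ hnR] at h
    exact Real.cos_pos_of_mem_Ioo ⟨by rw [hω]; linarith [h.1], by rw [hω]; linarith [h.2]⟩
  have hexp : exp (-(ω * I)) * (exp (θ * I) ^ 2 * exp (θ * I) ^ d) = exp (ω * I) := by
    rw [← pow_add, ← Complex.exp_nat_mul, ← Complex.exp_add, Complex.exp_eq_exp_iff_exists_int]
    refine ⟨j, ?_⟩
    have h1 : ((d + 2 : ℕ) : ℝ) * θ = 2 * ω + 2 * Real.pi * j := by
      rw [hω, hφ]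
      field_simp
      ring
    have h2 : ((d + 2 : ℕ) : ℂ) * θ = 2 * ω + 2 * Real.pi * j := by exact_mod_cast h1
    push_cast at h2 ⊢
    linear_combination I * h2
  have hlim : Tendsto (fun r : ℝ => (exp (-(ω * I)) * (exp (θ * I) ^ 2 *
      ((Pol d α (r * exp (θ * I)) - lam) / (r : ℂ) ^ d))).re) atTop (𝓝 (Real.cos ω)) := by
    have h := ((tendsto_pol_div_pow hd α lam (exp (θ * I))).const_mul
      (exp (θ * I) ^ 2)).const_mul (exp (-(ω * I)))
    rw [hexp] at h
    have h' := (Complex.continuous_re.tendsto _).comp h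
    rwa [Complex.exp_ofReal_mul_I_re] at h'
  obtain ⟨R, hR⟩ := eventually_atTop.1 (hlim.eventually (lt_mem_nhds (half_lt_self hcos)))
  refine ⟨exp (-(ω * I)), Real.cos ω / 2, max R 1, half_pos hcos, ?_, ?_, fun r hr => ?_⟩
  · rw [← neg_mul, ← Complex.ofReal_neg, Complex.norm_exp_ofReal_mul_I]
  · rw [← neg_mul, ← Complex.ofReal_neg, Complex.exp_ofReal_mul_I_re, Real.cos_neg]
    linarith
  · have h1 := hR r ((le_max_left _ _).trans hr)
    have hr1 : 1 ≤ r := (le_max_right _ _).trans hr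
    have hrd : 1 ≤ r ^ d := one_le_pow₀ hr1
    have hr0 : (r : ℂ) ≠ 0 := Complex.ofReal_ne_zero.2 (by linarith)
    have heq : exp (-(ω * I)) * (exp (θ * I) ^ 2 * (Pol d α (r * exp (θ * I)) - lam)) =
        (exp (-(ω * I)) * (exp (θ * I) ^ 2 *
          ((Pol d α (r * exp (θ * I)) - lam) / (r : ℂ) ^ d))) * ((r ^ d : ℝ) : ℂ) := by
      push_cast
      field_simp
    rw [heq, Complex.re_mul_ofReal]
    nlinarith

theorem stmt15 (d : ℕ) (hd : 2 ≤ d) (n : ℕ) (hn : n = d + 2)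
    (α : Fin (d - 1) → ℂ) (lam : ℂ)
    (y y₁ : ℂ → ℂ) (hy : IsSol d α lam y) (hy₁ : IsSol d α lam y₁)
    (hind : LinearIndependent ℂ ![y, y₁])
    (f : ℂ → ℂ) (hf : f = fun z => y z / y₁ z)
    (j : ℕ) (hj : j < n) :
    (∀ θ : ℝ, DirIn n j θ →
        Tendsto (fun r : ℝ => f ((r : ℂ) * Complex.exp (θ * Complex.I))) atTop (𝓝 0))
      ↔ Subdominant n j y := by
  subst hn hf
  obtain ⟨z₀, hz₀⟩ := wronskian_ne_zero hy.1 hy₁.1 hind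
  refine forall₂_congr fun θ hθ => ?_
  obtain ⟨κ, c, R, hQ⟩ := exists_coercive hd α lam hθ
  refine (hy.raySol (exp (θ * I))).tendsto_div_iff (hy₁.raySol _) hQ
    (mul_ne_zero (exp_ne_zero (θ * I)) hz₀) fun r => ?_
  rw [← hy.wronskian_const hy₁ (r * exp (θ * I)) z₀]
  ring
end

section
/- Let d ≥ 2 and n = d + 2, let y and y₁ be two linearly independent solutions of the Schrödinger equation with parameters (α, λ), and let f = y/y₁. Then the asymptotic values of f in any two adjacent Stokes sectors are different: for every j ∈ {0,…,n−1} (indices mod n), there is no w ∈ ℂ such that f(r·e^{iθ}) → w as r → +∞ along every ray direction θ of S_j and also along every ray direction θ of S_{j+1}; moreover it is not the case that |f(r·e^{iθ})| → +∞ along every ray direction of S_j and also along every ray direction of S_{j+1}. -/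
open Complex Filter Topology

theorem monotoneOn_Ici_of_hasDerivAt_nonneg {f f' : ℝ → ℝ} {R : ℝ}
    (hf : ∀ r ≥ R, HasDerivAt f (f' r) r) (hf' : ∀ r ≥ R, 0 ≤ f' r) :
    MonotoneOn f (Set.Ici R) := by
  refine monotoneOn_of_deriv_nonneg (convex_Ici R)
    (fun r hr => (hf r hr).continuousAt.continuousWithinAt) ?_ ?_
  · intro r hr
    exact (hf r (interior_subset hr)).differentiableAt.differentiableWithinAt
  · intro r hr
    rw [(hf r (interior_subset hr)).deriv]
    exact hf' r (interior_subset hr)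

theorem antitoneOn_Ici_of_hasDerivAt_nonpos {f f' : ℝ → ℝ} {R : ℝ}
    (hf : ∀ r ≥ R, HasDerivAt f (f' r) r) (hf' : ∀ r ≥ R, f' r ≤ 0) :
    AntitoneOn f (Set.Ici R) := by
  have h := monotoneOn_Ici_of_hasDerivAt_nonneg (f := fun r => -f r) (f' := fun r => -f' r)
    (fun r hr => (hf r hr).neg) (fun r hr => neg_nonneg.2 (hf' r hr))
  exact fun a ha b hb hab => neg_le_neg_iff.1 (h ha hb hab)

theorem inner_mul_self_right (q w : ℂ) : inner ℝ w (q * w) = q.re * ‖w‖ ^ 2 := by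
  rw [Complex.inner, ← Complex.normSq_eq_norm_sq, Complex.normSq_apply]
  simp only [mul_re, conj_re, conj_im, mul_im]
  ring

/-- A pair `(w, w₁)` with `w' = w₁` and `w₁' = q w`, that is, a solution of `w'' = q w` on the
real line together with its derivative. -/
structure IsRaySol (q w w₁ : ℝ → ℂ) : Prop where
  hasDerivAt : ∀ r, HasDerivAt w (w₁ r) r
  hasDerivAt' : ∀ r, HasDerivAt w₁ (q r * w r) r

namespace IsRaySol

variable {q w w₁ v v₁ : ℝ → ℂ} {R : ℝ}

theorem sub_const_mul (hw : IsRaySol q w w₁) (hv : IsRaySol q v v₁) (c : ℂ) :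
    IsRaySol q (fun r => w r - c * v r) (fun r => w₁ r - c * v₁ r) where
  hasDerivAt r := (hw.hasDerivAt r).sub ((hv.hasDerivAt r).const_mul c)
  hasDerivAt' r :=
    ((hw.hasDerivAt' r).sub ((hv.hasDerivAt' r).const_mul c)).congr_deriv (by ring)

theorem hasDerivAt_norm_sq (hw : IsRaySol q w w₁) (r : ℝ) :
    HasDerivAt (fun r => ‖w r‖ ^ 2) (2 * inner ℝ (w r) (w₁ r)) r :=
  (hw.hasDerivAt r).norm_sq

theorem hasDerivAt_inner (hw : IsRaySol q w w₁) (r : ℝ) :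
    HasDerivAt (fun r => inner ℝ (w r) (w₁ r)) ((q r).re * ‖w r‖ ^ 2 + ‖w₁ r‖ ^ 2) r := by
  have h := (hw.hasDerivAt r).inner ℝ (hw.hasDerivAt' r)
  rwa [inner_mul_self_right, real_inner_self_eq_norm_sq] at h

theorem inner_nonpos_of_eq_zero (hw : IsRaySol q w w₁) (hq : ∀ r ≥ R, 0 ≤ (q r).re) {t r : ℝ}
    (hr : R ≤ r) (hrt : r ≤ t) (ht : w t = 0) : inner ℝ (w r) (w₁ r) ≤ 0 := by
  have h := monotoneOn_Ici_of_hasDerivAt_nonneg (R := R) (fun r _ => hw.hasDerivAt_inner r)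
    (fun r hr => by have := hq r hr; positivity) hr (hr.trans hrt) hrt
  simpa [ht] using h

/-- If `w` is a limit of solutions vanishing further and further out, then `‖w‖²` decreases. -/
theorem inner_nonpos_of_frequently (hw : IsRaySol q w w₁) (hv : IsRaySol q v v₁)
    (hq : ∀ r ≥ R, 0 ≤ (q r).re) {c : ℝ → ℂ} (hc : Tendsto c atTop (𝓝 0))
    (hcw : ∃ᶠ t in atTop, w t = c t * v t) {r : ℝ} (hr : R ≤ r) :
    inner ℝ (w r) (w₁ r) ≤ 0 := by
  have hlim : Tendsto (fun t => inner ℝ (w r - c t * v r) (w₁ r - c t * v₁ r)) atTop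
      (𝓝 (inner ℝ (w r - 0 * v r) (w₁ r - 0 * v₁ r))) :=
    (tendsto_const_nhds.sub (hc.mul_const _)).inner (tendsto_const_nhds.sub (hc.mul_const _))
  rw [zero_mul, zero_mul, sub_zero, sub_zero] at hlim
  refine le_of_tendsto_of_frequently hlim ((hcw.and_eventually (eventually_ge_atTop r)).mono ?_)
  rintro t ⟨ht, hrt⟩
  exact (hw.sub_const_mul hv (c t)).inner_nonpos_of_eq_zero hq hr hrt (by simp [ht])

/-- A nonincreasing `‖w‖²` decays at least at the rate dictated by `q`. -/
theorem two_mul_inner_le (hw : IsRaySol q w w₁) (hG : ∀ r ≥ R, inner ℝ (w r) (w₁ r) ≤ 0)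
    {K : ℝ} (hK : 0 < K) (hq : ∀ r ≥ R, K ^ 2 ≤ 2 * (q r).re) :
    2 * inner ℝ (w R) (w₁ R) ≤ -K * ‖w R‖ ^ 2 := by
  have hanti : AntitoneOn (fun r => ‖w r‖ ^ 2) (Set.Ici R) :=
    antitoneOn_Ici_of_hasDerivAt_nonpos (fun r _ => hw.hasDerivAt_norm_sq r)
      (fun r hr => by linarith [hG r hr])
  have hexp (r : ℝ) : HasDerivAt (fun r => Real.exp (-(K * r))) (Real.exp (-(K * r)) * -K) r := by
    simpa using (((hasDerivAt_id r).const_mul K).neg).exp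
  have hmono : MonotoneOn
      (fun r => Real.exp (-(K * r)) * (2 * inner ℝ (w r) (w₁ r) + K * ‖w r‖ ^ 2)) (Set.Ici R) := by
    refine monotoneOn_Ici_of_hasDerivAt_nonneg
      (f' := fun r => Real.exp (-(K * r)) *
        ((2 * (q r).re - K ^ 2) * ‖w r‖ ^ 2 + 2 * ‖w₁ r‖ ^ 2)) (fun r _ => ?_) (fun r hr => ?_)
    · refine ((hexp r).mul (((hw.hasDerivAt_inner r).const_mul 2).add
        ((hw.hasDerivAt_norm_sq r).const_mul K))).congr_deriv ?_
      simp only [Pi.add_apply]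
      ring
    · have := sub_nonneg.2 (hq r hr)
      positivity
  have hlim : Tendsto (fun r => Real.exp (-(K * r)) * (K * ‖w R‖ ^ 2)) atTop (𝓝 0) := by
    have : Tendsto (fun r => Real.exp (-(K * r))) atTop (𝓝 0) :=
      Real.tendsto_exp_neg_atTop_nhds_zero.comp (tendsto_id.const_mul_atTop hK)
    simpa using this.mul_const (K * ‖w R‖ ^ 2)
  have hle : Real.exp (-(K * R)) * (2 * inner ℝ (w R) (w₁ R) + K * ‖w R‖ ^ 2) ≤ 0 := by
    refine ge_of_tendsto hlim ((eventually_ge_atTop R).mono fun r hr => ?_)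
    refine (hmono Set.self_mem_Ici hr hr).trans ?_
    refine mul_le_mul_of_nonneg_left ?_ (Real.exp_pos _).le
    have h1 := hG r hr
    have h2 : K * ‖w r‖ ^ 2 ≤ K * ‖w R‖ ^ 2 :=
      mul_le_mul_of_nonneg_left (hanti Set.self_mem_Ici hr hr) hK.le
    linarith
  have := nonpos_of_mul_nonpos_right hle (Real.exp_pos _)
  linarith

end IsRaySol

theorem rpow_half_sq (d : ℕ) {r : ℝ} (hr : 0 ≤ r) : (r ^ ((d : ℝ) / 2)) ^ 2 = r ^ d := by
  rw [← Real.rpow_natCast (r ^ _), ← Real.rpow_mul hr]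
  norm_num

theorem hasDerivAt_exp_rpow (d : ℕ) (a : ℝ) {r : ℝ} (hr : 0 < r) :
    HasDerivAt (fun r : ℝ => Real.exp (a * r ^ ((d : ℝ) / 2 + 1)))
      (Real.exp (a * r ^ ((d : ℝ) / 2 + 1)) * (a * ((d / 2 + 1) * r ^ ((d : ℝ) / 2)))) r := by
  have h := ((Real.hasDerivAt_rpow_const (p := (d : ℝ) / 2 + 1) (Or.inl hr.ne')).const_mul a).exp
  simpa using h

namespace IsRaySol

variable {q w w₁ v v₁ : ℝ → ℂ} {R : ℝ}

theorem antitoneOn_norm_sq_mul_exp (hw : IsRaySol q w w₁) (d : ℕ) (hR : 0 < R)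
    (hG : ∀ r ≥ R, inner ℝ (w r) (w₁ r) ≤ 0) (hq : ∀ r ≥ R, r ^ d / 4 ≤ (q r).re) :
    AntitoneOn (fun r => ‖w r‖ ^ 2 * Real.exp (1 / (d + 2) * r ^ ((d : ℝ) / 2 + 1)))
      (Set.Ici R) := by
  refine antitoneOn_Ici_of_hasDerivAt_nonpos
    (fun r hr => (hw.hasDerivAt_norm_sq r).mul (hasDerivAt_exp_rpow d _ (hR.trans_le hr)))
    (fun r hr => ?_)
  have hr0 : 0 < r := hR.trans_le hr
  have h := hw.two_mul_inner_le (R := r) (fun s hs => hG s (le_trans hr hs))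
    (K := r ^ ((d : ℝ) / 2) / 2) (by positivity) (fun s hs => by
      have h1 := hq s (le_trans hr hs)
      have h2 : r ^ d ≤ s ^ d := pow_le_pow_left₀ hr0.le hs d
      have h3 : 0 < r ^ d := by positivity
      rw [div_pow, rpow_half_sq d hr0.le]
      linarith)
  have h2 : 1 / ((d : ℝ) + 2) * ((d / 2 + 1) * r ^ ((d : ℝ) / 2)) = r ^ ((d : ℝ) / 2) / 2 := by
    field_simp
  rw [h2]
  have := mul_le_mul_of_nonneg_right h (Real.exp_pos (1 / (d + 2) * r ^ ((d : ℝ) / 2 + 1))).le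
  linarith

theorem exists_norm_le_exp (hw : IsRaySol q w w₁) (d : ℕ) (hR : 0 < R)
    (hG : ∀ r ≥ R, inner ℝ (w r) (w₁ r) ≤ 0) (hq : ∀ r ≥ R, r ^ d / 4 ≤ (q r).re) :
    ∃ C, ∀ r ≥ 0, ‖w r‖ * Real.exp (1 / (2 * (d + 2)) * r ^ ((d : ℝ) / 2 + 1)) ≤ C := by
  set g : ℝ → ℝ := fun r => ‖w r‖ * Real.exp (1 / (2 * (d + 2)) * r ^ ((d : ℝ) / 2 + 1)) with hg
  have hg2 (r : ℝ) : g r ^ 2 = ‖w r‖ ^ 2 * Real.exp (1 / (d + 2) * r ^ ((d : ℝ) / 2 + 1)) := by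
    rw [hg, mul_pow, ← Real.exp_nat_mul]
    congr 2
    push_cast
    field_simp
  have hcont : Continuous g := by
    have h1 : Continuous w := continuous_iff_continuousAt.2 fun r => (hw.hasDerivAt r).continuousAt
    have h2 : Continuous fun r : ℝ => r ^ ((d : ℝ) / 2 + 1) :=
      Real.continuous_rpow_const (by positivity)
    fun_prop
  obtain ⟨C, hC⟩ := (isCompact_Icc (a := (0 : ℝ)) (b := R)).exists_bound_of_continuousOn
    hcont.continuousOn
  refine ⟨C, fun r hr => ?_⟩
  have hC' (s : ℝ) (hs : 0 ≤ s) (hsR : s ≤ R) : g s ≤ C := (le_abs_self _).trans (hC s ⟨hs, hsR⟩)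
  rcases le_total r R with h | h
  · exact hC' r hr h
  · refine le_trans ?_ (hC' R hR.le le_rfl)
    have := hw.antitoneOn_norm_sq_mul_exp d hR hG hq Set.self_mem_Ici h h
    simp only [← hg2] at this
    exact (pow_le_pow_iff_left₀ (by positivity) (by positivity) two_ne_zero).1 this

/-- The logarithmic derivative of the energy `‖w'‖² + r^d ‖w‖²` is controlled by `q + r^d`. -/
theorem abs_deriv_energy_le (hw : IsRaySol q w w₁) (d : ℕ) {B r : ℝ} (hr : 1 ≤ r) (hB : d ≤ B * r)
    (hB0 : 0 ≤ B) (hq : ‖q r + r ^ d‖ ≤ B * r ^ d) :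
    ∃ e, HasDerivAt (fun r => ‖w₁ r‖ ^ 2 + r ^ d * ‖w r‖ ^ 2) e r ∧
      |e| ≤ 2 * B * r ^ ((d : ℝ) / 2) * (‖w₁ r‖ ^ 2 + r ^ d * ‖w r‖ ^ 2) := by
  have hr0 : 0 < r := by linarith
  refine ⟨_, ((hw.hasDerivAt' r).norm_sq).add ((hasDerivAt_pow d r).mul
    (hw.hasDerivAt_norm_sq r)), ?_⟩
  have h1 : 2 * inner ℝ (w₁ r) (q r * w r) + (d * r ^ (d - 1) * ‖w r‖ ^ 2 +
      r ^ d * (2 * inner ℝ (w r) (w₁ r))) =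
      2 * inner ℝ (w₁ r) ((q r + r ^ d) * w r) + d * r ^ (d - 1) * ‖w r‖ ^ 2 := by
    have : ((q r + (r : ℂ) ^ d) * w r) = q r * w r + (r ^ d : ℝ) • w r := by
      rw [Complex.real_smul]; push_cast; ring
    rw [this, inner_add_right, real_inner_smul_right, real_inner_comm (w₁ r) (w r)]
    ring
  rw [h1]
  set s := r ^ ((d : ℝ) / 2)
  have hs2 : s ^ 2 = r ^ d := rpow_half_sq d hr0.le
  have hs1 : 1 ≤ s := Real.one_le_rpow hr (by positivity)
  have h2 : |inner ℝ (w₁ r) ((q r + r ^ d) * w r)| ≤ ‖w₁ r‖ * (B * s ^ 2 * ‖w r‖) := by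
    refine (abs_real_inner_le_norm _ _).trans ?_
    rw [norm_mul, hs2]
    gcongr
  have h3 : d * r ^ (d - 1) ≤ B * s ^ 2 := by
    rw [hs2]
    rcases Nat.eq_zero_or_pos d with rfl | hd
    · simpa using hB0
    · obtain ⟨k, rfl⟩ : ∃ k, d = k + 1 := ⟨d - 1, by omega⟩
      rw [Nat.add_sub_cancel, pow_succ']
      nlinarith [pow_pos hr0 k]
  have h4 : |(d * r ^ (d - 1) * ‖w r‖ ^ 2)| ≤ B * s ^ 2 * ‖w r‖ ^ 2 := by
    rw [abs_of_nonneg (by positivity)]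
    gcongr
  refine (abs_add_le _ _).trans ?_
  rw [abs_mul, abs_two, ← hs2]
  have h5 : 2 * (‖w₁ r‖ * (B * s ^ 2 * ‖w r‖)) ≤ B * s * (‖w₁ r‖ ^ 2 + s ^ 2 * ‖w r‖ ^ 2) := by
    have : 0 ≤ B * s * (‖w₁ r‖ - s * ‖w r‖) ^ 2 := by positivity
    nlinarith
  have h6 : B * s ^ 2 * ‖w r‖ ^ 2 ≤ B * s * (‖w₁ r‖ ^ 2 + s ^ 2 * ‖w r‖ ^ 2) := by
    have h7 : 0 ≤ B * s * ‖w₁ r‖ ^ 2 := by positivity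
    have h8 : 0 ≤ (s - 1) * (B * s ^ 2 * ‖w r‖ ^ 2) :=
      mul_nonneg (by linarith) (by positivity)
    nlinarith
  linarith

theorem antitoneOn_energy_mul_exp (hw : IsRaySol q w w₁) (d : ℕ) {B : ℝ} (hR : 1 ≤ R)
    (hB0 : 0 ≤ B) (hB : d ≤ B * R) (hq : ∀ r ≥ R, ‖q r + r ^ d‖ ≤ B * r ^ d) :
    AntitoneOn (fun r => (‖w₁ r‖ ^ 2 + r ^ d * ‖w r‖ ^ 2) *
      Real.exp (-(4 * B / (d + 2)) * r ^ ((d : ℝ) / 2 + 1))) (Set.Ici R) := by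
  have h (r : ℝ) (hr : R ≤ r) := hw.abs_deriv_energy_le d (hR.trans hr)
    (hB.trans (mul_le_mul_of_nonneg_left hr hB0)) hB0 (hq r hr)
  choose! e he hle using h
  refine antitoneOn_Ici_of_hasDerivAt_nonpos
    (fun r hr => (he r hr).mul (hasDerivAt_exp_rpow d _ (by linarith))) (fun r hr => ?_)
  have h2 : -(4 * B / ((d : ℝ) + 2)) * ((d / 2 + 1) * r ^ ((d : ℝ) / 2)) =
      -(2 * B * r ^ ((d : ℝ) / 2)) := by
    field_simp
    ring
  rw [h2]
  have := mul_le_mul_of_nonneg_right ((le_abs_self _).trans (hle r hr))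
    (Real.exp_pos (-(4 * B / (d + 2)) * r ^ ((d : ℝ) / 2 + 1))).le
  linarith

theorem monotoneOn_energy_mul_exp (hw : IsRaySol q w w₁) (d : ℕ) {B : ℝ} (hR : 1 ≤ R)
    (hB0 : 0 ≤ B) (hB : d ≤ B * R) (hq : ∀ r ≥ R, ‖q r + r ^ d‖ ≤ B * r ^ d) :
    MonotoneOn (fun r => (‖w₁ r‖ ^ 2 + r ^ d * ‖w r‖ ^ 2) *
      Real.exp (4 * B / (d + 2) * r ^ ((d : ℝ) / 2 + 1))) (Set.Ici R) := by
  have h (r : ℝ) (hr : R ≤ r) := hw.abs_deriv_energy_le d (hR.trans hr)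
    (hB.trans (mul_le_mul_of_nonneg_left hr hB0)) hB0 (hq r hr)
  choose! e he hle using h
  refine monotoneOn_Ici_of_hasDerivAt_nonneg
    (fun r hr => (he r hr).mul (hasDerivAt_exp_rpow d _ (by linarith))) (fun r hr => ?_)
  have h2 : 4 * B / ((d : ℝ) + 2) * ((d / 2 + 1) * r ^ ((d : ℝ) / 2)) =
      2 * B * r ^ ((d : ℝ) / 2) := by
    field_simp
    ring
  rw [h2]
  have := mul_le_mul_of_nonneg_right (neg_le.1 ((neg_le_abs _).trans (hle r hr)))
    (Real.exp_pos (4 * B / (d + 2) * r ^ ((d : ℝ) / 2 + 1))).le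
  linarith

/-- On an oscillatory ray a solution that is exponentially small of the full order vanishes. -/
theorem eq_zero_of_norm_le (hw : IsRaySol q w w₁) (d : ℕ) {C c : ℝ} (hc : 0 < c)
    (hq : ∀ B > 0, ∀ᶠ r : ℝ in atTop, ‖q r + r ^ d‖ ≤ B * r ^ d)
    (hw0 : ∀ r ≥ 1, ‖w r‖ ≤ C * Real.exp (-(c * r ^ ((d : ℝ) / 2 + 1))))
    (hw1 : ∀ r ≥ 1, ‖w₁ r‖ ≤ C * r ^ ((d : ℝ) / 2 + 1) *
      Real.exp (-(c * r ^ ((d : ℝ) / 2 + 1)))) :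
    ∀ᶠ r in atTop, w r = 0 := by
  set B : ℝ := c * (d + 2) / 4 with hBdef
  have hB : 0 < B := by positivity
  have hBc : 4 * B / ((d : ℝ) + 2) = c := by rw [hBdef]; field_simp
  obtain ⟨R₀, hR₀⟩ := eventually_atTop.1 (hq B hB)
  set R := max R₀ (max 1 (d / B))
  have hR1 : 1 ≤ R := (le_max_left _ _).trans (le_max_right _ _)
  have hBR : d ≤ B * R := by
    have : d / B ≤ R := (le_max_right _ _).trans (le_max_right _ _)
    rwa [div_le_iff₀' hB] at this
  have hmono := hw.monotoneOn_energy_mul_exp d hR1 hB.le hBR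
    (fun r hr => hR₀ r ((le_max_left _ _).trans hr))
  rw [hBc] at hmono
  have hlim : Tendsto (fun r : ℝ => 2 * C ^ 2 / c ^ 2 * ((c * r ^ ((d : ℝ) / 2 + 1)) ^ 2 *
      Real.exp (-(c * r ^ ((d : ℝ) / 2 + 1))))) atTop (𝓝 0) := by
    have h1 : Tendsto (fun r : ℝ => c * r ^ ((d : ℝ) / 2 + 1)) atTop atTop :=
      (tendsto_rpow_atTop (by positivity)).const_mul_atTop hc
    simpa using ((Real.tendsto_pow_mul_exp_neg_atTop_nhds_zero 2).comp h1).const_mul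
      (2 * C ^ 2 / c ^ 2)
  have hup (r : ℝ) (hr : 1 ≤ r) : (‖w₁ r‖ ^ 2 + r ^ d * ‖w r‖ ^ 2) *
      Real.exp (c * r ^ ((d : ℝ) / 2 + 1)) ≤ 2 * C ^ 2 / c ^ 2 *
      ((c * r ^ ((d : ℝ) / 2 + 1)) ^ 2 * Real.exp (-(c * r ^ ((d : ℝ) / 2 + 1)))) := by
    have hr0 : 0 < r := by linarith
    have hd : r ^ d ≤ (r ^ ((d : ℝ) / 2 + 1)) ^ 2 := by
      rw [← rpow_half_sq d hr0.le]
      gcongr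
      linarith
    set x := r ^ ((d : ℝ) / 2 + 1)
    have hx : 0 < x := by positivity
    have h1 := pow_le_pow_left₀ (norm_nonneg _) (hw0 r hr) 2
    have h2 := pow_le_pow_left₀ (norm_nonneg _) (hw1 r hr) 2
    have h3 : r ^ d * ‖w r‖ ^ 2 ≤ x ^ 2 * (C * Real.exp (-(c * x))) ^ 2 := by gcongr
    have h4 : Real.exp (-(c * x)) * Real.exp (c * x) = 1 := by rw [← Real.exp_add]; simp
    calc _ ≤ ((C * x * Real.exp (-(c * x))) ^ 2 + x ^ 2 * (C * Real.exp (-(c * x))) ^ 2) *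
          Real.exp (c * x) := by gcongr
      _ = 2 * C ^ 2 * x ^ 2 * Real.exp (-(c * x)) *
          (Real.exp (-(c * x)) * Real.exp (c * x)) := by ring
      _ = _ := by rw [h4]; field_simp
  filter_upwards [eventually_ge_atTop R] with r hr
  have hr1 : 1 ≤ r := hR1.trans hr
  have hle : (‖w₁ r‖ ^ 2 + r ^ d * ‖w r‖ ^ 2) * Real.exp (c * r ^ ((d : ℝ) / 2 + 1)) ≤ 0 :=
    ge_of_tendsto hlim ((eventually_ge_atTop r).mono fun s hs =>
      (hmono hr (le_trans hr hs) hs).trans (hup s (hr1.trans hs)))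
  have h0 := nonpos_of_mul_nonpos_left hle (Real.exp_pos _)
  have hrd : 0 < r ^ d := by positivity
  have : ‖w r‖ ^ 2 ≤ 0 := by
    by_contra! h
    have := mul_pos hrd h
    nlinarith [sq_nonneg ‖w₁ r‖]
  simpa using le_antisymm this (by positivity)

end IsRaySol

theorem exists_norm_Pol_sub_le (d : ℕ) (α : Fin (d - 1) → ℂ) (lam : ℂ) :
    ∃ C ≥ 0, ∀ z : ℂ, 1 ≤ ‖z‖ → ‖Pol d α z - lam - z ^ d‖ ≤ C * ‖z‖ ^ (d - 1) := by
  refine ⟨∑ i, ‖α i‖ + ‖lam‖, by positivity, fun z hz => ?_⟩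
  have h : Pol d α z - lam - z ^ d = ∑ i, α i * z ^ ((i : ℕ) + 1) - lam := by rw [Pol]; ring
  rw [h, add_mul, Finset.sum_mul]
  refine (norm_sub_le _ _).trans (add_le_add ((norm_sum_le _ _).trans
    (Finset.sum_le_sum fun i _ => ?_)) (le_mul_of_one_le_right (norm_nonneg _)
      (one_le_pow₀ hz)))
  rw [norm_mul, norm_pow]
  gcongr
  omega

theorem norm_ofReal_mul_of_norm_eq_one {e : ℂ} (he : ‖e‖ = 1) {r : ℝ} (hr : 0 ≤ r) :
    ‖(r : ℂ) * e‖ = r := by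
  rw [norm_mul, he, mul_one, Complex.norm_real, Real.norm_of_nonneg hr]

/-- The potential seen along the ray in the direction `e`. -/
noncomputable def rayPotential (d : ℕ) (α : Fin (d - 1) → ℂ) (lam e : ℂ) (r : ℝ) : ℂ :=
  e ^ 2 * (Pol d α (r * e) - lam)

theorem exists_norm_rayPotential_sub_le (d : ℕ) (hd : 1 ≤ d) (α : Fin (d - 1) → ℂ) (lam : ℂ) :
    ∃ C ≥ 0, ∀ e : ℂ, ‖e‖ = 1 → ∀ r ≥ (1 : ℝ),
      ‖rayPotential d α lam e r - e ^ (d + 2) * r ^ d‖ * r ≤ C * r ^ d := by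
  obtain ⟨C, hC0, hC⟩ := exists_norm_Pol_sub_le d α lam
  refine ⟨C, hC0, fun e he r hr => ?_⟩
  have hn := norm_ofReal_mul_of_norm_eq_one he (r := r) (by linarith)
  have h : rayPotential d α lam e r - e ^ (d + 2) * r ^ d =
      e ^ 2 * (Pol d α (r * e) - lam - (r * e) ^ d) := by rw [rayPotential]; ring
  have h1 := hC (r * e) (hn.symm ▸ hr)
  rw [hn] at h1
  rw [h, norm_mul, norm_pow, he, one_pow, one_mul]
  rw [← pow_sub_one_mul (by omega) r, ← mul_assoc]
  exact mul_le_mul_of_nonneg_right h1 (show 0 ≤ r by linarith)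

namespace IsSol

variable {d : ℕ} {α : Fin (d - 1) → ℂ} {lam : ℂ} {u v : ℂ → ℂ}

theorem sub_const_mul (hu : IsSol d α lam u) (hv : IsSol d α lam v) (c : ℂ) :
    IsSol d α lam (fun z => u z - c * v z) := by
  have h1 : deriv (fun z => u z - c * v z) = fun z => deriv u z - c * deriv v z := by
    funext z
    exact ((hu.1 z).hasDerivAt.sub ((hv.1 z).hasDerivAt.const_mul c)).deriv
  refine ⟨hu.1.sub (hv.1.const_mul c), fun z => ?_⟩
  rw [h1]
  refine ((hu.1.deriv z).hasDerivAt.sub ((hv.1.deriv z).hasDerivAt.const_mul c)).deriv.trans ?_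
  rw [hu.2, hv.2]
  ring

theorem isRaySol (hu : IsSol d α lam u) (e : ℂ) :
    IsRaySol (rayPotential d α lam e) (fun r => u (r * e)) (fun r => e * deriv u (r * e)) where
  hasDerivAt r := by
    have h : HasDerivAt (fun r : ℝ => (r : ℂ) * e) e r := by
      simpa using (Complex.ofRealCLM.hasDerivAt (x := r)).mul_const e
    exact ((hu.1 _).hasDerivAt.comp r h).congr_deriv (mul_comm _ _)
  hasDerivAt' r := by
    have h : HasDerivAt (fun r : ℝ => (r : ℂ) * e) e r := by
      simpa using (Complex.ofRealCLM.hasDerivAt (x := r)).mul_const e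
    refine (((hu.1.deriv _).hasDerivAt.comp r h).const_mul e).congr_deriv ?_
    rw [hu.2, rayPotential]
    ring

theorem exists_decay_of_frequently (hd : 1 ≤ d) (hu : IsSol d α lam u) (hv : IsSol d α lam v)
    {e : ℂ} (he : ‖e‖ = 1) (hre : (e ^ (d + 2)).re = 1 / 2) {c : ℝ → ℂ}
    (hc : Tendsto c atTop (𝓝 0)) (hcu : ∃ᶠ t : ℝ in atTop, u (t * e) = c t * v (t * e)) :
    ∃ C, ∀ r : ℝ, 0 ≤ r →
      ‖u (r * e)‖ * Real.exp (1 / (2 * (d + 2)) * r ^ ((d : ℝ) / 2 + 1)) ≤ C := by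
  obtain ⟨C, hC0, hC⟩ := exists_norm_rayPotential_sub_le d hd α lam
  have hR1 : 1 ≤ max 1 (4 * C) := le_max_left _ _
  have hq : ∀ r ≥ max 1 (4 * C), r ^ d / 4 ≤ (rayPotential d α lam e r).re := by
    intro r hr
    have hr1 : 1 ≤ r := hR1.trans hr
    have hrC : 4 * C ≤ r := (le_max_right _ _).trans hr
    have h1 := hC e he r hr1
    have h2 := (abs_le.1 (Complex.abs_re_le_norm
      (rayPotential d α lam e r - e ^ (d + 2) * r ^ d))).1
    have h3 : (e ^ (d + 2) * (r : ℂ) ^ d).re = r ^ d / 2 := by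
      rw [← Complex.ofReal_pow, Complex.re_mul_ofReal, hre]
      ring
    rw [Complex.sub_re, h3] at h2
    have hrd : 0 < r ^ d := by positivity
    have h4 : ‖rayPotential d α lam e r - e ^ (d + 2) * r ^ d‖ ≤ r ^ d / 4 := by
      refine le_of_mul_le_mul_right (h1.trans ?_) (show 0 < r by linarith)
      nlinarith
    linarith
  have hq0 : ∀ r ≥ max 1 (4 * C), 0 ≤ (rayPotential d α lam e r).re := fun r hr =>
    le_trans (by have := hR1.trans hr; positivity) (hq r hr)
  exact (hu.isRaySol e).exists_norm_le_exp d (by linarith)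
    (fun r hr => (hu.isRaySol e).inner_nonpos_of_frequently (hv.isRaySol e) hq0 hc hcu hr) hq

/-- A solution has order at most `(d + 2) / 2` and finite type. -/
theorem exists_growth (hd : 1 ≤ d) (hu : IsSol d α lam u) :
    ∃ M ≥ 0, ∃ b ≥ 0, ∀ z : ℂ, ‖u z‖ ≤ M * Real.exp (b * ‖z‖ ^ ((d : ℝ) / 2 + 1)) := by
  obtain ⟨C, hC0, hC⟩ := exists_norm_rayPotential_sub_le d hd α lam
  obtain ⟨M₀, hM₀⟩ := (isCompact_closedBall (0 : ℂ) 1).exists_bound_of_continuousOn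
    hu.1.continuous.continuousOn
  obtain ⟨M₁, hM₁⟩ := (isCompact_closedBall (0 : ℂ) 1).exists_bound_of_continuousOn
    hu.1.deriv.continuous.continuousOn
  have hM₀0 : 0 ≤ M₀ := (norm_nonneg _).trans (hM₀ 0 (by simp))
  have hM₁0 : 0 ≤ M₁ := (norm_nonneg _).trans (hM₁ 0 (by simp))
  set B : ℝ := C + 2 + d with hB
  have hB0 : 0 ≤ B := by positivity
  have hκ : 0 ≤ 4 * B / ((d : ℝ) + 2) := by positivity
  refine ⟨M₀ + M₁, by positivity, 4 * B / (d + 2), hκ, fun z => ?_⟩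
  rcases le_total ‖z‖ 1 with hz | hz
  · refine (hM₀ z (by simpa using hz)).trans ?_
    have : 1 ≤ Real.exp (4 * B / (d + 2) * ‖z‖ ^ ((d : ℝ) / 2 + 1)) :=
      Real.one_le_exp (by positivity)
    nlinarith
  · set r := ‖z‖ with hr
    set e : ℂ := z / r with he'
    have hr0 : (r : ℂ) ≠ 0 := by
      rw [Complex.ofReal_ne_zero]
      linarith
    have hze : (r : ℂ) * e = z := by rw [he']; field_simp
    have he : ‖e‖ = 1 := by
      rw [he', norm_div, Complex.norm_real, hr, norm_norm, div_self]
      linarith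
    have hq : ∀ s ≥ (1 : ℝ), ‖rayPotential d α lam e s + s ^ d‖ ≤ B * s ^ d := by
      intro s hs
      have h1 := hC e he s hs
      have hs0 : 0 < s := by linarith
      have h2 : ‖rayPotential d α lam e s - e ^ (d + 2) * s ^ d‖ ≤ C * s ^ d :=
        (le_mul_of_one_le_right (norm_nonneg _) hs).trans h1
      have h3 : ‖e ^ (d + 2) * (s : ℂ) ^ d + s ^ d‖ ≤ 2 * s ^ d := by
        refine (norm_add_le _ _).trans (le_of_eq ?_)
        rw [norm_mul, norm_pow, he, norm_pow, Complex.norm_real, Real.norm_of_nonneg hs0.le]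
        ring
      calc _ = ‖(rayPotential d α lam e s - e ^ (d + 2) * s ^ d) +
            (e ^ (d + 2) * (s : ℂ) ^ d + s ^ d)‖ := by congr 1; ring
        _ ≤ C * s ^ d + 2 * s ^ d := norm_add_le_of_le h2 h3
        _ ≤ B * s ^ d := by
          have : 0 ≤ (d : ℝ) * s ^ d := by positivity
          rw [hB]
          linarith
    have hanti := (hu.isRaySol e).antitoneOn_energy_mul_exp d le_rfl hB0
      (by rw [hB]; linarith) hq (Set.self_mem_Ici (a := (1 : ℝ))) (Set.mem_Ici.2 hz) hz
    simp only [Complex.ofReal_one, one_mul, one_pow, norm_mul, he, Real.one_rpow, mul_one,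
      hze] at hanti
    set x := r ^ ((d : ℝ) / 2 + 1)
    have he1 : e ∈ Metric.closedBall (0 : ℂ) 1 := by simp [he]
    have h1 : ‖deriv u e‖ ^ 2 + ‖u e‖ ^ 2 ≤ (M₀ + M₁) ^ 2 := by
      have := pow_le_pow_left₀ (norm_nonneg _) (hM₀ e he1) 2
      have := pow_le_pow_left₀ (norm_nonneg _) (hM₁ e he1) 2
      nlinarith
    have h2 : ‖u z‖ ^ 2 ≤ ‖deriv u z‖ ^ 2 + r ^ d * ‖u z‖ ^ 2 := by
      have : ‖u z‖ ^ 2 ≤ r ^ d * ‖u z‖ ^ 2 :=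
        le_mul_of_one_le_left (by positivity) (one_le_pow₀ hz)
      nlinarith [sq_nonneg ‖deriv u z‖]
    have h3 : Real.exp (-(4 * B / (d + 2)) * x) * Real.exp (4 * B / (d + 2) * x) = 1 := by
      rw [← Real.exp_add]
      simp
    have h4 : Real.exp (-(4 * B / (d + 2))) ≤ 1 := Real.exp_le_one_iff.2 (by linarith)
    have h5 : 1 ≤ Real.exp (4 * B / (d + 2) * x) := Real.one_le_exp (by positivity)
    refine (pow_le_pow_iff_left₀ (norm_nonneg _) (by positivity) two_ne_zero).1 ?_
    calc ‖u z‖ ^ 2 ≤ ‖deriv u z‖ ^ 2 + r ^ d * ‖u z‖ ^ 2 := h2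
      _ = (‖deriv u z‖ ^ 2 + r ^ d * ‖u z‖ ^ 2) * Real.exp (-(4 * B / (d + 2)) * x) *
          Real.exp (4 * B / (d + 2) * x) := by rw [mul_assoc, h3, mul_one]
      _ ≤ (‖deriv u e‖ ^ 2 + ‖u e‖ ^ 2) * Real.exp (-(4 * B / (d + 2))) *
          Real.exp (4 * B / (d + 2) * x) := by gcongr
      _ ≤ (M₀ + M₁) ^ 2 * 1 * Real.exp (4 * B / (d + 2) * x) ^ 2 := by
          gcongr
          exact le_self_pow₀ h5 two_ne_zero
      _ = _ := by ring

end IsSol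

theorem exp_mul_eq_rpow_exp (x p : ℝ) : Real.exp (p * x) = Real.exp x ^ p := by
  rw [← Real.exp_mul, mul_comm]

theorem exp_add_ofReal_mul_I (ζ : ℂ) (θ : ℝ) :
    Complex.exp (ζ + θ * I) = (Real.exp ζ.re : ℂ) * Complex.exp ((θ + ζ.im : ℝ) * I) := by
  rw [Complex.ofReal_exp, ← Complex.exp_add]
  congr 1
  apply Complex.ext <;> simp [add_comm]

theorem norm_exp_ofReal_mul_exp_le {c : ℝ} (hc : 0 ≤ c) (p : ℝ) (ζ : ℂ) :
    ‖Complex.exp (c * Complex.exp (p * ζ))‖ ≤ Real.exp (c * Real.exp ζ.re ^ p) := by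
  rw [Complex.norm_exp, ← exp_mul_eq_rpow_exp]
  refine Real.exp_le_exp.2 ?_
  rw [Complex.re_ofReal_mul]
  refine mul_le_mul_of_nonneg_left ((Complex.re_le_norm _).trans ?_) hc
  rw [Complex.norm_exp, Complex.re_ofReal_mul]

/-- Phragmén–Lindelöf in a sector with centre direction `θ` and half-opening `δ`: exponential decay
on the two sides propagates to the interior. -/
theorem norm_mul_exp_le_of_sector {u : ℂ → ℂ} (hu : Differentiable ℂ u) {p M b c C δ θ : ℝ}
    (hp : 0 ≤ p) (hM : 0 ≤ M) (hb : 0 ≤ b) (hc : 0 ≤ c)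
    (hpδ : p < Real.pi / (δ - -δ))
    (hgrowth : ∀ z, ‖u z‖ ≤ M * Real.exp (b * ‖z‖ ^ p))
    (hl : ∀ r : ℝ, 0 ≤ r → ‖u (r * Complex.exp ((θ + -δ : ℝ) * I))‖ * Real.exp (c * r ^ p) ≤ C)
    (hr : ∀ r : ℝ, 0 ≤ r → ‖u (r * Complex.exp ((θ + δ : ℝ) * I))‖ * Real.exp (c * r ^ p) ≤ C)
    {ζ : ℂ} (h1 : -δ ≤ ζ.im) (h2 : ζ.im ≤ δ) :
    ‖u (Complex.exp (ζ + θ * I)) * Complex.exp (c * Complex.exp (p * ζ))‖ ≤ C := by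
  refine PhragmenLindelof.horizontal_strip (a := -δ) (b := δ)
    (f := fun ζ => u (Complex.exp (ζ + θ * I)) * Complex.exp (c * Complex.exp (p * ζ)))
    (Differentiable.diffContOnCl (by fun_prop)) ⟨p, hpδ, b + c, ?_⟩ ?_ ?_ h1 h2
  · refine Asymptotics.IsBigO.of_bound M (Eventually.of_forall fun ζ => ?_)
    have hle : Real.exp ζ.re ^ p ≤ Real.exp (p * |ζ.re|) := by
      rw [← exp_mul_eq_rpow_exp]
      exact Real.exp_le_exp.2 (mul_le_mul_of_nonneg_left (le_abs_self _) hp)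
    have hn : ‖Complex.exp (ζ + θ * I)‖ = Real.exp ζ.re := by simp [Complex.norm_exp]
    rw [norm_mul, Real.norm_of_nonneg (Real.exp_pos _).le]
    calc _ ≤ M * Real.exp (b * Real.exp ζ.re ^ p) * Real.exp (c * Real.exp ζ.re ^ p) := by
          refine mul_le_mul ?_ (norm_exp_ofReal_mul_exp_le hc p ζ) (norm_nonneg _) (by positivity)
          simpa only [hn] using hgrowth (Complex.exp (ζ + θ * I))
      _ = M * Real.exp ((b + c) * Real.exp ζ.re ^ p) := by
          rw [mul_assoc, ← Real.exp_add, ← add_mul]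
      _ ≤ _ := by gcongr
  · intro ζ hζ
    rw [norm_mul, exp_add_ofReal_mul_I, hζ]
    exact (mul_le_mul_of_nonneg_left (norm_exp_ofReal_mul_exp_le hc p ζ) (norm_nonneg _)).trans
      (hl _ (Real.exp_pos _).le)
  · intro ζ hζ
    rw [norm_mul, exp_add_ofReal_mul_I, hζ]
    exact (mul_le_mul_of_nonneg_left (norm_exp_ofReal_mul_exp_le hc p ζ) (norm_nonneg _)).trans
      (hr _ (Real.exp_pos _).le)

/-- On the bisector of the sector both `u` and its derivative decay exponentially. -/
theorem exists_decay_bisector {u : ℂ → ℂ} (hu : Differentiable ℂ u) {p c C δ θ : ℝ}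
    (hp : 0 ≤ p) (hc : 0 ≤ c) (hδ : 0 < δ)
    (hF : ∀ ζ : ℂ, -δ ≤ ζ.im → ζ.im ≤ δ →
      ‖u (Complex.exp (ζ + θ * I)) * Complex.exp (c * Complex.exp (p * ζ))‖ ≤ C) :
    ∃ C', (∀ r : ℝ, 1 ≤ r →
        ‖u (r * Complex.exp (θ * I))‖ ≤ C' * Real.exp (-(c * r ^ p))) ∧
      ∀ r : ℝ, 1 ≤ r → ‖Complex.exp (θ * I) * deriv u (r * Complex.exp (θ * I))‖ ≤
        C' * r ^ p * Real.exp (-(c * r ^ p)) := by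
  set e : ℂ := Complex.exp (θ * I)
  set F : ℂ → ℂ := fun ζ => u (Complex.exp (ζ + θ * I)) * Complex.exp (c * Complex.exp (p * ζ))
  have hC0 : 0 ≤ C := (norm_nonneg _).trans (hF 0 (by simpa using hδ.le) (by simpa using hδ.le))
  have hlog (r : ℝ) (hr : 1 ≤ r) : Complex.exp ((Real.log r : ℂ) + θ * I) = r * e := by
    rw [Complex.exp_add, ← Complex.ofReal_exp, Real.exp_log (by linarith)]
  have hlogp (r : ℝ) (hr : 1 ≤ r) :
      Complex.exp ((p : ℂ) * (Real.log r : ℂ)) = ((r ^ p : ℝ) : ℂ) := by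
    rw [← Complex.ofReal_mul, ← Complex.ofReal_exp, exp_mul_eq_rpow_exp,
      Real.exp_log (by linarith)]
  have hexp (x : ℝ) : Real.exp x * Real.exp (-x) = 1 := by rw [← Real.exp_add]; simp
  have hval (r : ℝ) (hr : 1 ≤ r) : ‖u (r * e)‖ * Real.exp (c * r ^ p) ≤ C := by
    have h := hF (Real.log r) (by simpa using hδ.le) (by simpa using hδ.le)
    rwa [hlog r hr, hlogp r hr, norm_mul, ← Complex.ofReal_mul, ← Complex.ofReal_exp,
      Complex.norm_real, Real.norm_of_nonneg (Real.exp_pos _).le] at h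
  have hderiv (r : ℝ) (hr : 1 ≤ r) :
      ‖e * deriv u (r * e)‖ * Real.exp (c * r ^ p) ≤ (C / δ + C * c * p) * r ^ p := by
    have hr0 : 0 < r := by linarith
    have hx : 1 ≤ r ^ p := Real.one_le_rpow hr hp
    have hd : HasDerivAt F (r * (e * deriv u (r * e)) * Real.exp (c * r ^ p) +
        u (r * e) * Real.exp (c * r ^ p) * (c * p * r ^ p : ℝ)) (Real.log r : ℂ) := by
      have h1 : HasDerivAt (fun ζ : ℂ => Complex.exp (ζ + θ * I))
          (Complex.exp ((Real.log r : ℂ) + θ * I)) (Real.log r : ℂ) := by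
        simpa using ((hasDerivAt_id (Real.log r : ℂ)).add_const (θ * I)).cexp
      have h2 : HasDerivAt (fun ζ : ℂ => Complex.exp (c * Complex.exp (p * ζ))) _
          (Real.log r : ℂ) :=
        ((((hasDerivAt_id (Real.log r : ℂ)).const_mul (p : ℂ)).cexp).const_mul (c : ℂ)).cexp
      refine (((hu _).hasDerivAt.comp _ h1).mul h2).congr_deriv ?_
      simp only [id, Function.comp, hlog r hr, hlogp r hr]
      push_cast
      ring
    have hcauchy : ‖deriv F (Real.log r : ℂ)‖ ≤ C / δ := by
      refine norm_deriv_le_of_forall_mem_sphere_norm_le hδ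
        (Differentiable.diffContOnCl (by fun_prop)) fun ζ hζ => ?_
      have h := (Complex.abs_im_le_norm (ζ - (Real.log r : ℂ))).trans
        (mem_sphere_iff_norm.1 hζ).le
      rw [Complex.sub_im, Complex.ofReal_im, sub_zero, abs_le] at h
      exact hF ζ h.1 h.2
    rw [hd.deriv] at hcauchy
    have hE : ‖((Real.exp (c * r ^ p) : ℝ) : ℂ)‖ = Real.exp (c * r ^ p) := by
      rw [Complex.norm_real, Real.norm_of_nonneg (Real.exp_pos _).le]
    have hsecond : ‖u (r * e) * Real.exp (c * r ^ p) * (c * p * r ^ p : ℝ)‖ ≤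
        C * (c * p * r ^ p) := by
      rw [norm_mul, norm_mul, hE, Complex.norm_real,
        Real.norm_of_nonneg (show 0 ≤ c * p * r ^ p by positivity)]
      exact mul_le_mul_of_nonneg_right (hval r hr) (by positivity)
    have hfirst := (norm_le_add_norm_add _ _).trans (add_le_add hcauchy hsecond)
    rw [norm_mul, norm_mul (r : ℂ), hE, Complex.norm_real, Real.norm_of_nonneg hr0.le,
      mul_assoc] at hfirst
    have h3 : C / δ ≤ C / δ * r ^ p := le_mul_of_one_le_right (by positivity) hx
    have h4 := le_mul_of_one_le_left (a := r)
      (b := ‖e * deriv u (r * e)‖ * Real.exp (c * r ^ p)) (by positivity) hr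
    linarith
  refine ⟨C + (C / δ + C * c * p), fun r hr => ?_, fun r hr => ?_⟩
  · have h := mul_le_mul_of_nonneg_right (hval r hr) (Real.exp_pos (-(c * r ^ p))).le
    rw [mul_assoc, hexp, mul_one] at h
    refine h.trans (mul_le_mul_of_nonneg_right ?_ (Real.exp_pos _).le)
    have : 0 ≤ C / δ + C * c * p := by positivity
    linarith
  · have h := mul_le_mul_of_nonneg_right (hderiv r hr) (Real.exp_pos (-(c * r ^ p))).le
    rw [mul_assoc, hexp, mul_one] at h
    refine h.trans (mul_le_mul_of_nonneg_right (mul_le_mul_of_nonneg_right ?_ (by positivity))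
      (Real.exp_pos _).le)
    linarith

namespace IsSol

variable {d : ℕ} {α : Fin (d - 1) → ℂ} {lam : ℂ} {u v : ℂ → ℂ}

theorem eq_zero_of_decay (hd : 1 ≤ d) (hu : IsSol d α lam u) {θ c C : ℝ} (hc : 0 < c)
    (hθ : Complex.exp (θ * I) ^ (d + 2) = -1)
    (h0 : ∀ r : ℝ, 1 ≤ r → ‖u (r * Complex.exp (θ * I))‖ ≤
      C * Real.exp (-(c * r ^ ((d : ℝ) / 2 + 1))))
    (h1 : ∀ r : ℝ, 1 ≤ r → ‖Complex.exp (θ * I) * deriv u (r * Complex.exp (θ * I))‖ ≤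
      C * r ^ ((d : ℝ) / 2 + 1) * Real.exp (-(c * r ^ ((d : ℝ) / 2 + 1)))) :
    ∀ᶠ r : ℝ in atTop, u (r * Complex.exp (θ * I)) = 0 := by
  obtain ⟨D, hD0, hD⟩ := exists_norm_rayPotential_sub_le d hd α lam
  refine (hu.isRaySol (Complex.exp (θ * I))).eq_zero_of_norm_le d hc (fun B hB => ?_) h0 h1
  filter_upwards [eventually_ge_atTop 1, eventually_ge_atTop (D / B)] with r hr hrD
  have h := hD _ (Complex.norm_exp_ofReal_mul_I θ) r hr
  rw [hθ, neg_one_mul, sub_neg_eq_add] at h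
  rw [div_le_iff₀' hB] at hrD
  have hrd : 0 < r ^ d := by positivity
  refine le_of_mul_le_mul_right (h.trans ?_) (show 0 < r by linarith)
  nlinarith

/-- An entire function vanishing far out on a ray vanishes identically. -/
theorem _root_.Differentiable.eq_zero_of_eventually_ray (hu : Differentiable ℂ u) {e : ℂ}
    (he : e ≠ 0) (h : ∀ᶠ r : ℝ in atTop, u (r * e) = 0) (z : ℂ) : u z = 0 := by
  obtain ⟨R, hR⟩ := eventually_atTop.1 h
  have hfreq : ∃ᶠ z in 𝓝[≠] ((R : ℂ) * e), u z = 0 := by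
    have htend : Tendsto (fun r : ℝ => (r : ℂ) * e) (𝓝[>] R) (𝓝[≠] ((R : ℂ) * e)) := by
      refine tendsto_nhdsWithin_of_tendsto_nhds_of_eventually_within _ ?_ ?_
      · have : Continuous fun r : ℝ => (r : ℂ) * e := by fun_prop
        exact (this.tendsto R).mono_left nhdsWithin_le_nhds
      · filter_upwards [self_mem_nhdsWithin] with r hr
        simpa [he] using (ne_of_gt hr)
    refine htend.frequently (Eventually.frequently ?_)
    filter_upwards [self_mem_nhdsWithin] with r hr using hR r (le_of_lt hr)
  exact congrFun (AnalyticOnNhd.eq_of_frequently_eq (g := fun _ => 0)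
    (fun z _ => hu.analyticAt z) (fun z _ => analyticAt_const) hfreq) z

/-- A solution which is dominated by other solutions on a ray in each of two adjacent Stokes
sectors vanishes. -/
theorem eq_zero_of_adjacent (hd : 1 ≤ d) (hu : IsSol d α lam u) (hv : IsSol d α lam v) {θ : ℝ}
    (hθ : Complex.exp (θ * I) ^ (d + 2) = -1)
    (h : ∀ φ : ℝ, (φ = θ - 2 * Real.pi / (3 * (d + 2)) ∨ φ = θ + 2 * Real.pi / (3 * (d + 2))) →
      ∃ c : ℝ → ℂ, Tendsto c atTop (𝓝 0) ∧ ∃ᶠ t : ℝ in atTop,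
        u (t * Complex.exp (φ * I)) = c t * v (t * Complex.exp (φ * I))) (z : ℂ) :
    u z = 0 := by
  set δ : ℝ := 2 * Real.pi / (3 * (d + 2)) with hδ
  have hδ0 : 0 < δ := by have := Real.pi_pos; positivity
  have hside (s : ℝ) (hs : s = 1 ∨ s = -1) : ∃ C, ∀ r : ℝ, 0 ≤ r →
      ‖u (r * Complex.exp ((θ + s * δ : ℝ) * I))‖ *
        Real.exp (1 / (2 * (d + 2)) * r ^ ((d : ℝ) / 2 + 1)) ≤ C := by
    obtain ⟨c, hc, hcu⟩ := h (θ + s * δ) (by rcases hs with rfl | rfl <;> simp [sub_eq_add_neg])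
    refine hu.exists_decay_of_frequently hd hv (Complex.norm_exp_ofReal_mul_I _) ?_ hc hcu
    have h1 : Complex.exp ((θ + s * δ : ℝ) * I) ^ (d + 2) =
        -Complex.exp ((s * (2 * Real.pi / 3) : ℝ) * I) := by
      have h2 : Complex.exp ((θ + s * δ : ℝ) * I) =
          Complex.exp (θ * I) * Complex.exp ((s * δ : ℝ) * I) := by
        rw [← Complex.exp_add]
        congr 1
        push_cast
        ring
      rw [h2, mul_pow, hθ, neg_one_mul, ← Complex.exp_nat_mul]
      congr 2
      have h3 : ((d : ℝ) + 2) * (s * δ) = s * (2 * Real.pi / 3) := by rw [hδ]; field_simp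
      rw [← h3]
      push_cast
      ring
    have h4 : Real.cos (2 * Real.pi / 3) = -(1 / 2) := by
      rw [show 2 * Real.pi / 3 = Real.pi - Real.pi / 3 by ring, Real.cos_pi_sub,
        Real.cos_pi_div_three]
    rw [h1, Complex.neg_re, Complex.exp_ofReal_mul_I_re]
    rcases hs with rfl | rfl
    · rw [one_mul, h4, neg_neg]
    · rw [neg_one_mul, Real.cos_neg, h4, neg_neg]
  obtain ⟨C₁, hC₁⟩ := hside 1 (Or.inl rfl)
  obtain ⟨C₂, hC₂⟩ := hside (-1) (Or.inr rfl)
  simp only [one_mul, neg_one_mul] at hC₁ hC₂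
  obtain ⟨M, hM, b, hb, hgrowth⟩ := hu.exists_growth hd
  have hp : 0 ≤ (d : ℝ) / 2 + 1 := by positivity
  have hc : 0 < 1 / (2 * ((d : ℝ) + 2)) := by positivity
  have hpδ : (d : ℝ) / 2 + 1 < Real.pi / (δ - -δ) := by
    have h5 : Real.pi / (δ - -δ) = 3 * (d + 2) / 4 := by
      have := Real.pi_pos
      rw [hδ]
      field_simp
      ring
    rw [h5]
    have : (0 : ℝ) ≤ d := by positivity
    linarith
  obtain ⟨C, h0, h1⟩ := exists_decay_bisector hu.1 hp hc.le hδ0 fun ζ =>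
    norm_mul_exp_le_of_sector hu.1 hp hM hb hc.le hpδ hgrowth
      (fun r hr => (hC₂ r hr).trans (le_max_right C₁ C₂))
      (fun r hr => (hC₁ r hr).trans (le_max_left C₁ C₂))
  exact hu.1.eq_zero_of_eventually_ray (Complex.exp_ne_zero _)
    (hu.eq_zero_of_decay hd hc hθ h0 h1) z

end IsSol

/-- The two directions `θ ± 2π / (3n)` around the common boundary direction `θ` of two adjacent
Stokes sectors are ray directions of these sectors, up to a multiple of `2π`. -/
theorem exists_dirIn_of_adjacent {n j : ℕ} (hn : 0 < n) (hj : j < n) {φ : ℝ}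
    (hφ : φ = (2 * j + 1) * Real.pi / n - 2 * Real.pi / (3 * n) ∨
      φ = (2 * j + 1) * Real.pi / n + 2 * Real.pi / (3 * n)) :
    ∃ ψ : ℝ, (DirIn n j ψ ∨ DirIn n ((j + 1) % n) ψ) ∧
      Complex.exp (ψ * I) = Complex.exp (φ * I) := by
  have hn' : (0 : ℝ) < n := by exact_mod_cast hn
  have hlt : |Real.pi / (3 * n)| < Real.pi / n := by
    have := Real.pi_pos
    rw [abs_of_pos (by positivity)]
    gcongr
    linarith
  rcases hφ with rfl | rfl
  · refine ⟨_, Or.inl ?_, rfl⟩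
    rw [DirIn]
    convert hlt using 2
    field_simp
    ring
  · rcases Nat.lt_or_ge (j + 1) n with h | h
    · refine ⟨_, Or.inr ?_, rfl⟩
      rw [DirIn, Nat.mod_eq_of_lt h, ← abs_neg]
      convert hlt using 2
      push_cast
      field_simp
      ring
    · obtain rfl : n = j + 1 := by omega
      refine ⟨(2 * j + 1) * Real.pi / (j + 1 : ℕ) + 2 * Real.pi / (3 * (j + 1 : ℕ)) - 2 * Real.pi,
        Or.inr ?_, ?_⟩
      · rw [DirIn, Nat.mod_self, ← abs_neg]
        convert hlt using 2
        push_cast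
        field_simp
        ring
      · rw [Complex.ofReal_sub, sub_mul]
        push_cast
        exact Complex.exp_periodic.sub_eq _

theorem IsSol.frequently_ne_zero {d : ℕ} {α : Fin (d - 1) → ℂ} {lam : ℂ} {v : ℂ → ℂ}
    (hv : IsSol d α lam v) (h0 : v ≠ 0) {e : ℂ} (he : e ≠ 0) :
    ∃ᶠ t : ℝ in atTop, v (t * e) ≠ 0 := by
  intro h
  exact h0 (funext (hv.1.eq_zero_of_eventually_ray he (by simpa using h)))

theorem stmt16 (d : ℕ) (hd : 2 ≤ d) (n : ℕ) (hn : n = d + 2)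
    (α : Fin (d - 1) → ℂ) (lam : ℂ)
    (y y₁ : ℂ → ℂ) (hy : IsSol d α lam y) (hy₁ : IsSol d α lam y₁)
    (hind : LinearIndependent ℂ ![y, y₁])
    (f : ℂ → ℂ) (hf : f = fun z => y z / y₁ z)
    (j : ℕ) (hj : j < n) :
    (¬ ∃ w : ℂ,
        (∀ θ : ℝ, DirIn n j θ →
          Tendsto (fun r : ℝ => f ((r : ℂ) * Complex.exp (θ * Complex.I))) atTop (𝓝 w)) ∧
        (∀ θ : ℝ, DirIn n ((j + 1) % n) θ →
          Tendsto (fun r : ℝ => f ((r : ℂ) * Complex.exp (θ * Complex.I))) atTop (𝓝 w))) ∧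
    ¬ ((∀ θ : ℝ, DirIn n j θ →
          Tendsto (fun r : ℝ => ‖f ((r : ℂ) * Complex.exp (θ * Complex.I))‖) atTop atTop) ∧
       (∀ θ : ℝ, DirIn n ((j + 1) % n) θ →
          Tendsto (fun r : ℝ => ‖f ((r : ℂ) * Complex.exp (θ * Complex.I))‖) atTop atTop)) := by
  have hn0 : 0 < n := by omega
  have hn' : (n : ℝ) = d + 2 := by rw [hn]; push_cast; ring
  have hbdry : Complex.exp (((2 * j + 1) * Real.pi / n : ℝ) * I) ^ (d + 2) = -1 := by
    rw [← hn, ← Complex.exp_nat_mul, ← Complex.exp_pi_mul_I,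
      ← Complex.exp_periodic.nat_mul j (Real.pi * I)]
    congr 1
    have : (n : ℂ) ≠ 0 := by exact_mod_cast hn0.ne'
    push_cast
    field_simp
    ring
  have hind' := LinearIndependent.pair_iff.1 hind
  have hy0 : y ≠ 0 := hind.ne_zero 0
  have hy₁0 : y₁ ≠ 0 := hind.ne_zero 1
  have key {P : ℝ → Prop} (h₁ : ∀ θ, DirIn n j θ → P θ) (h₂ : ∀ θ, DirIn n ((j + 1) % n) θ → P θ)
      (φ : ℝ) (hφ : φ = (2 * j + 1) * Real.pi / n - 2 * Real.pi / (3 * (d + 2)) ∨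
        φ = (2 * j + 1) * Real.pi / n + 2 * Real.pi / (3 * (d + 2))) :
      ∃ ψ : ℝ, P ψ ∧ Complex.exp (ψ * I) = Complex.exp (φ * I) := by
    rw [← hn'] at hφ
    obtain ⟨ψ, hψ, he⟩ := exists_dirIn_of_adjacent hn0 hj hφ
    exact ⟨ψ, hψ.elim (h₁ ψ) (h₂ ψ), he⟩
  subst hf
  constructor
  · rintro ⟨w, h₁, h₂⟩
    have hzero := (hy.sub_const_mul hy₁ w).eq_zero_of_adjacent (by omega) hy₁ hbdry fun φ hφ => by
      obtain ⟨ψ, hψ, he⟩ := key h₁ h₂ φ hφ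
      rw [he] at hψ
      refine ⟨_, by simpa using hψ.sub_const w,
        (hy₁.frequently_ne_zero hy₁0 (Complex.exp_ne_zero (φ * I))).mono fun t ht => ?_⟩
      field_simp
    have := hind' 1 (-w) (funext fun z => by simpa [sub_eq_add_neg] using hzero z)
    simp at this
  · rintro ⟨h₁, h₂⟩
    refine hy₁0 (funext (hy₁.eq_zero_of_adjacent (by omega) hy hbdry fun φ hφ => ?_))
    obtain ⟨ψ, hψ, he⟩ := key h₁ h₂ φ hφ
    rw [he] at hψ
    refine ⟨_, tendsto_inv₀_cobounded.comp (tendsto_norm_atTop_iff_cobounded.1 hψ),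
      (hy.frequently_ne_zero hy0 (Complex.exp_ne_zero (φ * I))).mono fun t ht => ?_⟩
    simp only [Function.comp]
    field_simp
end
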